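/- arXiv:1912.05424 — 2 statements merged into one kernel-verified Lean document; each statement's English description precedes it below -/
import Mathlib

section
/- Let A be a commutative ring, n ≥ 3, and f ∈ A[x] a monic polynomial. Then the natural map GL_n(A[x])/E_n(A[x]) → GL_n(A[x]_f)/E_n(A[x]_f) induced by the localization A[x] → A[x]_f is injective; equivalently, if g ∈ GL_n(A[x]) becomes a product of elementary matrices over A[x]_f, then g ∈ E_n(A[x]). -/
/-- The elementary subgroup `E_n(R) ⊆ GL_n(R)`. -/
def elemGL (n : ℕ) (R : Type*) [CommRing R] : Subgroup (GL (Fin n) R) :=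
  Subgroup.closure {g | ∃ (i j : Fin n) (a : R), i ≠ j ∧
    (g : Matrix (Fin n) (Fin n) R) = Matrix.transvection i j a}

/-- The homomorphism `GL_n(R) → GL_n(S)` induced by a ring homomorphism. -/
def glMap {n : ℕ} {R S : Type*} [CommRing R] [CommRing S] (f : R →+* S) :
    GL (Fin n) R →* GL (Fin n) S := Units.map (RingHom.mapMatrix f).toMonoidHom


open Matrix

section Basics

variable {n : ℕ} {R S T : Type*} [CommRing R] [CommRing S] [CommRing T]

/-- transvection as an element of `GL`. -/
def tv (i j : Fin n) (h : i ≠ j) (c : R) : GL (Fin n) R where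
  val := Matrix.transvection i j c
  inv := Matrix.transvection i j (-c)
  val_inv := by rw [Matrix.transvection_mul_transvection_same _ _ h]; simp
  inv_val := by rw [Matrix.transvection_mul_transvection_same _ _ h]; simp

theorem coe_tv (i j : Fin n) (h : i ≠ j) (c : R) :
    (tv i j h c : GL (Fin n) R).val = 1 + Matrix.single i j c := rfl

theorem coe_glMap (f : R →+* S) (g : GL (Fin n) R) : (glMap f g).val = g.val.map f := rfl

theorem tv_mem (i j : Fin n) (h : i ≠ j) (c : R) : tv i j h c ∈ elemGL n R :=
  Subgroup.subset_closure ⟨i, j, c, h, rfl⟩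

theorem tv_inv (i j : Fin n) (h : i ≠ j) (c : R) : (tv i j h c)⁻¹ = tv i j h (-c) := by
  apply Units.ext; rfl

theorem tv_add (i j : Fin n) (h : i ≠ j) (c d : R) :
    tv i j h (c + d) = tv i j h c * tv i j h d := by
  apply Units.ext
  exact (Matrix.transvection_mul_transvection_same _ _ h c d).symm

theorem tv_zero (i j : Fin n) (h : i ≠ j) : tv i j h (0 : R) = 1 := by
  apply Units.ext; simp [coe_tv]

theorem glMap_tv (f : R →+* S) (i j : Fin n) (h : i ≠ j) (c : R) :
    glMap f (tv i j h c) = tv i j h (f c) := by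
  apply Units.ext
  ext a b
  simp [coe_tv, coe_glMap, Matrix.single_apply, Matrix.one_apply, apply_ite f]

theorem glMap_glMap (f : R →+* S) (f' : S →+* T) (g : GL (Fin n) R) :
    glMap f' (glMap f g) = glMap (f'.comp f) g := by
  apply Units.ext; ext a b; simp [coe_glMap]

theorem glMap_id (g : GL (Fin n) R) : glMap (RingHom.id R) g = g := by
  apply Units.ext; ext a b; simp [coe_glMap]

theorem elem_induct {P : GL (Fin n) R → Prop} (h1 : P 1)
    (hm : ∀ i j (h : i ≠ j) c g, g ∈ elemGL n R → P g → P (tv i j h c * g))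
    {g : GL (Fin n) R} (hg : g ∈ elemGL n R) : P g := by
  unfold elemGL at hg
  induction hg using Subgroup.closure_induction_left with
  | one => exact h1
  | mul_left x hx y hy ih =>
    obtain ⟨i, j, a, h, hxx⟩ := hx
    have : x = tv i j h a := Units.ext hxx
    rw [this]; exact hm _ _ _ _ _ hy ih
  | inv_mul_cancel x hx y hy ih =>
    obtain ⟨i, j, a, h, hxx⟩ := hx
    have : x = tv i j h a := Units.ext hxx
    rw [this, tv_inv]; exact hm _ _ _ _ _ hy ih

theorem glMap_mem (f : R →+* S) {g : GL (Fin n) R} (hg : g ∈ elemGL n R) :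
    glMap f g ∈ elemGL n S := by
  refine elem_induct (P := fun g => glMap f g ∈ elemGL n S) ?_ ?_ hg
  · rw [map_one]; exact one_mem _
  · intro i j h c g hg ih
    rw [map_mul, glMap_tv]; exact mul_mem (tv_mem _ _ _ _) ih

/-- A matrix is elementary. -/
def IsE (M : Matrix (Fin n) (Fin n) R) : Prop := ∃ g ∈ elemGL n R, g.val = M

theorem IsE.one : IsE (1 : Matrix (Fin n) (Fin n) R) := ⟨1, one_mem _, rfl⟩

theorem IsE.mul {M N : Matrix (Fin n) (Fin n) R} (hM : IsE M) (hN : IsE N) : IsE (M * N) := by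
  obtain ⟨g, hg, rfl⟩ := hM
  obtain ⟨h, hh, rfl⟩ := hN
  exact ⟨g * h, mul_mem hg hh, rfl⟩

theorem IsE.mem {g : GL (Fin n) R} (h : IsE g.val) : g ∈ elemGL n R := by
  obtain ⟨g', hg, he⟩ := h
  rwa [← Units.ext he]

theorem IsE.transpose {M : Matrix (Fin n) (Fin n) R} (hM : IsE M) : IsE Mᵀ := by
  obtain ⟨g, hg, rfl⟩ := hM
  refine elem_induct (P := fun g => IsE g.valᵀ) ?_ ?_ hg
  · simpa using IsE.one
  · intro i j h c g hg ih
    have : (tv i j h c * g).val = (tv i j h c).val * g.val := rfl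
    rw [this, Matrix.transpose_mul]
    refine ih.mul ⟨tv j i h.symm c, tv_mem _ _ _ _, ?_⟩
    simp [coe_tv]

/-- column unipotents -/
theorem col_mem (H : Subgroup (GL (Fin n) R)) (k : Fin n) (v : Fin n → R) (hv : v k = 0)
    (hH : ∀ j (h : j ≠ k), tv j k h (v j) ∈ H) :
    ∃ g ∈ H, g.val = 1 + Matrix.vecMulVec v (Pi.single k 1) := by
  have key : ∀ s : Finset (Fin n), k ∉ s → ∃ g ∈ H, g.val =
      1 + ∑ j ∈ s, Matrix.single j k (v j) := by
    intro s
    induction s using Finset.induction_on with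
    | empty => intro _; exact ⟨1, one_mem _, by simp⟩
    | insert a s ha ih =>
      intro hk
      rw [Finset.mem_insert, not_or] at hk
      obtain ⟨g, hg, hgv⟩ := ih hk.2
      refine ⟨tv a k (Ne.symm hk.1) (v a) * g, mul_mem (hH _ _) hg, ?_⟩
      rw [Units.val_mul, hgv, coe_tv, Finset.sum_insert ha, mul_add, add_mul, add_mul, mul_one,
        mul_one, one_mul, Finset.mul_sum]
      have : ∑ j ∈ s, Matrix.single a k (v a) * Matrix.single j k (v j) = 0 := by
        apply Finset.sum_eq_zero
        intro j hj
        apply Matrix.single_mul_single_of_ne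
        rintro rfl; exact hk.2 hj
      rw [this]; abel
  obtain ⟨g, hg, hgv⟩ := key (Finset.univ.erase k) (by simp)
  refine ⟨g, hg, ?_⟩
  rw [hgv]
  congr 1
  have h2 : ∑ j ∈ Finset.univ.erase k, Matrix.single j k (v j) = ∑ j, Matrix.single j k (v j) := by
    apply Finset.sum_erase
    simp [hv]
  rw [h2]
  ext a b
  simp [Matrix.sum_apply, Matrix.single_apply, Matrix.vecMulVec_apply, Pi.single_apply]
  by_cases hb : b = k
  · subst hb; simp
  · simp [hb, Ne.symm hb]

theorem isE_col (k : Fin n) (v : Fin n → R) (hv : v k = 0) :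
    IsE (1 + Matrix.vecMulVec v (Pi.single k 1)) := by
  obtain ⟨g, hg, h⟩ := col_mem (elemGL n R) k v hv (fun j h => tv_mem _ _ _ _)
  exact ⟨g, hg, h⟩

theorem isE_row (k : Fin n) (v : Fin n → R) (hv : v k = 0) :
    IsE (1 + Matrix.vecMulVec (Pi.single k 1) v) := by
  have := (isE_col k v hv).transpose
  simpa [Matrix.transpose_vecMulVec] using this

theorem isE_vw_aux (v w : Fin n → R) (k : Fin n) (hw : w k = 0) (hwv : w ⬝ᵥ v = 0) :
    IsE (1 + Matrix.vecMulVec v w) := by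
  set e : Fin n → R := Pi.single k 1 with he
  set v' : Fin n → R := v - v k • e with hv'
  have hv'k : v' k = 0 := by simp [hv', he]
  have hwe : w ⬝ᵥ e = 0 := by simp [he, hw]
  have hwv' : w ⬝ᵥ v' = 0 := by simp [hv', dotProduct_sub, hwv, hwe]
  have hev' : e ⬝ᵥ v' = 0 := by simp [he, hv'k]
  have hee : e ⬝ᵥ e = 1 := by simp [he]
  have h1 : IsE (1 + Matrix.vecMulVec v' e) := isE_col k v' hv'k
  have h2 : IsE (1 + Matrix.vecMulVec e w) := isE_row k w hw
  have h3 : IsE (1 + Matrix.vecMulVec (-v') e) := isE_col k _ (by simp [hv'k])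
  have h4 : IsE (1 + Matrix.vecMulVec e (-w)) := isE_row k _ (by simp [hw])
  have h5 : IsE (1 + Matrix.vecMulVec e (v k • w)) := isE_row k _ (by simp [hw])
  have := h5.mul (((h1.mul h2).mul h3).mul h4)
  convert this using 1
  have hv : v = v' + v k • e := by simp [hv']
  have hXX : Matrix.vecMulVec v' e * Matrix.vecMulVec v' e = 0 := by
    rw [Matrix.vecMulVec_mul_vecMulVec, hev']; simp
  have hYY : Matrix.vecMulVec e w * Matrix.vecMulVec e w = 0 := by
    rw [Matrix.vecMulVec_mul_vecMulVec, hwe]; simp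
  have hYX : Matrix.vecMulVec e w * Matrix.vecMulVec v' e = 0 := by
    rw [Matrix.vecMulVec_mul_vecMulVec, hwv']; simp
  have hXY : Matrix.vecMulVec v' e * Matrix.vecMulVec e w = Matrix.vecMulVec v' w := by
    rw [Matrix.vecMulVec_mul_vecMulVec, hee]; simp
  have h0 : Matrix.vecMulVec v w = Matrix.vecMulVec v' w + v k • Matrix.vecMulVec e w := by
    conv_lhs => rw [hv]
    rw [Matrix.add_vecMulVec, Matrix.smul_vecMulVec]
  rw [h0, Matrix.neg_vecMulVec, Matrix.vecMulVec_neg, Matrix.vecMulVec_smul, ← hXY]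
  generalize Matrix.vecMulVec v' e = X at *
  generalize Matrix.vecMulVec e w = Y at *
  have a1 : ∀ Z, X * (X * Z) = 0 := fun Z => by rw [← mul_assoc, hXX, zero_mul]
  have a2 : ∀ Z, Y * (Y * Z) = 0 := fun Z => by rw [← mul_assoc, hYY, zero_mul]
  have a3 : ∀ Z, Y * (X * Z) = 0 := fun Z => by rw [← mul_assoc, hYX, zero_mul]
  simp only [mul_add, add_mul, mul_one, one_mul, mul_neg, neg_mul, mul_assoc, hXX, hYY, hYX, a1, a2, a3,
    smul_mul_assoc, mul_zero, smul_zero, add_zero, neg_zero]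
  abel

theorem exists_third (hn : 3 ≤ n) (i j : Fin n) : ∃ k, k ≠ i ∧ k ≠ j := by
  by_contra! hcon
  have : (Finset.univ : Finset (Fin n)) ⊆ {i, j} := by
    intro k _
    by_cases hk : k = i
    · simp [hk]
    · simp [hcon k hk]
  have h2 := Finset.card_le_card this
  have h3 := Finset.card_le_two (a := i) (b := j)
  simp at h2
  omega

/-- Lemma of Suslin -/
theorem isE_suslin (hn : 3 ≤ n) (v : Fin n → R) (c : Fin n → Fin n → R) :
    IsE (1 + Matrix.vecMulVec v (∑ k, ∑ l, c k l • (v l • Pi.single k 1 - v k • Pi.single l 1))) := by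
  let Q : (Fin n → R) → Prop := fun w => w ⬝ᵥ v = 0 ∧ IsE (1 + Matrix.vecMulVec v w)
  have hadd : ∀ a b, Q a → Q b → Q (a + b) := by
    rintro a b ⟨ha, ha'⟩ ⟨hb, hb'⟩
    refine ⟨by simp [add_dotProduct, ha, hb], ?_⟩
    convert ha'.mul hb' using 1
    simp [mul_add, add_mul, Matrix.vecMulVec_mul_vecMulVec, ha, Matrix.vecMulVec_add, add_assoc]
  have h0 : Q 0 := ⟨by simp, by simpa using IsE.one⟩
  refine (Finset.sum_induction _ Q hadd h0 ?_ : Q _).2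
  intro k _
  refine Finset.sum_induction _ Q hadd h0 ?_
  intro l _
  have hz : (c k l • (v l • Pi.single k 1 - v k • Pi.single l 1) : Fin n → R) ⬝ᵥ v = 0 := by
    simp [smul_dotProduct, sub_dotProduct]
    ring
  obtain ⟨m, hm1, hm2⟩ := exists_third hn k l
  exact ⟨hz, isE_vw_aux v _ m (by simp [hm1, hm2]) hz⟩

theorem suslin_comb (u v w : Fin n → R) (huv : u ⬝ᵥ v = 1) (hwv : w ⬝ᵥ v = 0) :
    w = ∑ k, ∑ l, (w k * u l) • (v l • Pi.single k 1 - v k • Pi.single l 1) := by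
  ext m
  simp only [Finset.sum_apply, Pi.smul_apply, Pi.sub_apply, smul_eq_mul, Pi.single_apply, mul_sub,
    Finset.sum_sub_distrib, mul_ite, mul_one, mul_zero]
  have h1 : ∑ k, ∑ l, (if m = k then w k * u l * v l else 0) = w m * ∑ l, u l * v l := by
    rw [Finset.sum_eq_single m]
    · simp [Finset.mul_sum, mul_assoc]
    · intro b _ hb; simp [Ne.symm hb]
    · simp
  have h2 : ∑ k, ∑ l, (if m = l then w k * u l * v k else 0) = (∑ k, w k * v k) * u m := by
    simp [Finset.sum_mul]
    exact Finset.sum_congr rfl fun _ _ => by ring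
  rw [h1, h2]
  change _ = w m * (u ⬝ᵥ v) - (w ⬝ᵥ v) * u m
  rw [huv, hwv]; ring

end Basics


open Matrix

section Dilation

variable {n : ℕ} {R S T : Type*} [CommRing R] [CommRing S] [CommRing T]

open Polynomial in
theorem gen0 {P : GL (Fin n) R[X] → Prop} (h1 : P 1) (hmul : ∀ a b, P a → P b → P (a * b))
    (hgen : ∀ g ∈ elemGL n R, ∀ i j (h : i ≠ j) (r : R[X]),
      P (glMap Polynomial.C g * tv i j h (Polynomial.X * r) * (glMap Polynomial.C g)⁻¹))
    {p : GL (Fin n) R[X]} (hp : p ∈ elemGL n R[X])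
    (h0 : glMap (Polynomial.evalRingHom 0) p = 1) : P p := by
  let N : Submonoid (GL (Fin n) R[X]) := Submonoid.closure
    {q | ∃ g ∈ elemGL n R, ∃ i j, ∃ h : i ≠ j, ∃ r : R[X],
      q = glMap Polynomial.C g * tv i j h (Polynomial.X * r) * (glMap Polynomial.C g)⁻¹}
  have hNP : ∀ q ∈ N, P q := by
    intro q hq
    induction hq using Submonoid.closure_induction with
    | mem x hx => obtain ⟨g, hg, i, j, h, r, rfl⟩ := hx; exact hgen g hg i j h r
    | one => exact h1
    | mul x y _ _ hx hy => exact hmul _ _ hx hy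
  have hnorm : ∀ g ∈ elemGL n R, ∀ q ∈ N,
      glMap Polynomial.C g * q * (glMap Polynomial.C g)⁻¹ ∈ N := by
    intro g hg q hq
    induction hq using Submonoid.closure_induction with
    | mem x hx =>
      obtain ⟨g', hg', i, j, h, r, rfl⟩ := hx
      apply Submonoid.subset_closure
      refine ⟨g * g', mul_mem hg hg', i, j, h, r, ?_⟩
      rw [map_mul]; group
    | one => simp
    | mul x y _ _ hx hy =>
      have := mul_mem hx hy
      convert this using 1
      group
  have hgenN : ∀ i j (h : i ≠ j) (r : R[X]), tv i j h (Polynomial.X * r) ∈ N := by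
    intro i j h r
    apply Submonoid.subset_closure
    refine ⟨1, one_mem _, i, j, h, r, ?_⟩
    rw [map_one, one_mul, inv_one, mul_one]
  have key : ∃ q ∈ N, p = q * glMap Polynomial.C (glMap (Polynomial.evalRingHom 0) p) := by
    clear h0
    clear_value N
    refine elem_induct (P := fun p : GL (Fin n) R[X] => ∃ q ∈ N, p = q * glMap Polynomial.C
      (glMap (Polynomial.evalRingHom 0) p)) ?_ ?_ hp
    · refine ⟨(1 : GL (Fin n) R[X]), N.one_mem, ?_⟩
      rw [map_one, map_one, mul_one]
    · rintro i j h c g hg ⟨q, hq, hgq⟩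
      have hc : c = Polynomial.X * c.divX + Polynomial.C (c.eval 0) := by
        rw [← Polynomial.coeff_zero_eq_eval_zero, Polynomial.X_mul_divX_add]
      have hn := hnorm (tv i j h (c.eval 0)) (tv_mem _ _ _ _) q hq
      rw [glMap_tv] at hn
      refine ⟨tv i j h (Polynomial.X * c.divX) * (tv i j h (Polynomial.C (c.eval 0)) * q *
        (tv i j h (Polynomial.C (c.eval 0)))⁻¹), mul_mem ?_ hn, ?_⟩
      · exact hgenN i j h c.divX
      · rw [map_mul, map_mul, glMap_tv, glMap_tv]
        conv_lhs => rw [hc, tv_add, hgq]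
        simp only [Polynomial.coe_evalRingHom]
        group
  obtain ⟨q, hq, hpq⟩ := key
  rw [h0, map_one, mul_one] at hpq
  rw [hpq]; exact hNP q hq

theorem conj_form_map (f : R →+* S) (g : GL (Fin n) R) (i j : Fin n) (h : i ≠ j) :
    ∃ u v w : Fin n → R, u ⬝ᵥ v = 1 ∧ w ⬝ᵥ v = 0 ∧
    ∀ c, (glMap f g * tv i j h c * (glMap f g)⁻¹).val =
      1 + Matrix.vecMulVec (fun a => f (v a)) (c • fun a => f (w a)) := by
  refine ⟨g⁻¹.val i, fun a => g.val a i, g⁻¹.val j, ?_, ?_, ?_⟩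
  · have : (g⁻¹ * g).val i i = (1 : Matrix (Fin n) (Fin n) R) i i := by simp
    rw [Units.val_mul, Matrix.mul_apply, Matrix.one_apply_eq] at this
    exact this
  · have : (g⁻¹ * g).val j i = (1 : Matrix (Fin n) (Fin n) R) j i := by simp
    rw [Units.val_mul, Matrix.mul_apply, Matrix.one_apply_ne h.symm] at this
    exact this
  · intro c
    rw [Units.val_mul, Units.val_mul, coe_tv, mul_add, add_mul, mul_one, ← Units.val_mul,
      mul_inv_cancel, Units.val_one]
    congr 1
    ext a b
    rw [Matrix.mul_apply, Finset.sum_eq_single j]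
    · rw [Matrix.mul_single_apply_same, ← map_inv, coe_glMap, coe_glMap]
      simp [Matrix.vecMulVec_apply]; ring
    · intro k _ hk
      rw [Matrix.mul_single_apply_of_ne _ _ _ _ _ hk, zero_mul]
    · simp

/-- every element of `S` becomes integral after multiplication by an element of `M`. -/
def HasDen (φ : R →+* S) (M : Submonoid R) : Prop := ∀ c : S, ∃ s ∈ M, ∃ r, φ r = φ s * c

theorem HasDen.fam {φ : R →+* S} {M : Submonoid R} (H : HasDen φ M) {ι : Type*} (t : Finset ι)
    (v : ι → S) : ∃ s ∈ M, ∃ r : ι → R, ∀ i ∈ t, φ (r i) = φ s * v i := by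
  classical
  choose s hs r hr using fun i => H (v i)
  refine ⟨∏ i ∈ t, s i, prod_mem fun i _ => hs i, fun i => (∏ j ∈ t.erase i, s j) * r i, ?_⟩
  intro i hi
  rw [map_mul, hr, ← Finset.mul_prod_erase t s hi, map_mul]; ring

open Polynomial in
theorem HasDen.poly {φ : R →+* S} {M : Submonoid R} (H : HasDen φ M) (p : S[X]) :
    ∃ s ∈ M, ∃ r : R[X], r.map φ = Polynomial.C (φ s) * p := by
  obtain ⟨s, hs, r, hr⟩ := H.fam p.support (fun i => p.coeff i)
  refine ⟨s, hs, ∑ i ∈ p.support, Polynomial.monomial i (r i), ?_⟩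
  rw [Polynomial.map_sum]
  conv_rhs => rw [p.as_sum_support, Finset.mul_sum]
  refine Finset.sum_congr rfl fun i hi => ?_
  rw [Polynomial.map_monomial, hr i hi, Polynomial.C_mul_monomial]

open Polynomial in
/-- substitution `X ↦ s X`. -/
noncomputable def sc (s : R) : R[X] →+* R[X] := Polynomial.eval₂RingHom Polynomial.C (Polynomial.C s * Polynomial.X)

theorem sc_C (s r : R) : sc s (Polynomial.C r) = Polynomial.C r := by simp [sc]
theorem sc_X (s : R) : sc s Polynomial.X = Polynomial.C s * Polynomial.X := by simp [sc]
theorem sc_comp_C (s : R) : (sc s).comp Polynomial.C = Polynomial.C := by ext; simp [sc_C]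
theorem sc_sc (s t : R) : (sc t).comp (sc s) = sc (s * t) := by
  ext
  · simp [sc_C]
  · simp [sc_C, sc_X, mul_assoc]
theorem sc_map (φ : R →+* S) (s : R) :
    (sc (φ s)).comp (Polynomial.mapRingHom φ) = (Polynomial.mapRingHom φ).comp (sc s) := by
  ext
  · simp [sc_C]
  · simp [sc_X]

open Polynomial in
def LiftAt (φ : R →+* S) (s : R) (h : GL (Fin n) S[X]) : Prop :=
  ∃ h' ∈ elemGL n R[X], glMap (Polynomial.mapRingHom φ) h' = glMap (sc (φ s)) h

theorem LiftAt.mono {φ : R →+* S} {s : R} {h : GL (Fin n) (Polynomial S)} (H : LiftAt φ s h) (t : R) :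
    LiftAt φ (s * t) h := by
  obtain ⟨h', hh', e⟩ := H
  refine ⟨glMap (sc t) h', glMap_mem _ hh', ?_⟩
  rw [glMap_glMap, ← sc_map, ← glMap_glMap, e, glMap_glMap, sc_sc, map_mul]

theorem dilation (hn : 3 ≤ n) {φ : R →+* S} {M : Submonoid R} (H : HasDen φ M)
    {h : GL (Fin n) (Polynomial S)} (hh : h ∈ elemGL n (Polynomial S))
    (h0 : glMap (Polynomial.evalRingHom 0) h = 1) : ∃ s ∈ M, LiftAt φ s h := by
  refine gen0 (P := fun h => ∃ s ∈ M, LiftAt φ s h) ?_ ?_ ?_ hh h0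
  · exact ⟨1, one_mem _, 1, one_mem _, by simp⟩
  · rintro a b ⟨s, hs, ha⟩ ⟨t, ht, hb⟩
    obtain ⟨a', ha', ea⟩ := ha.mono t
    obtain ⟨b', hb', eb⟩ := hb.mono s
    refine ⟨s * t, mul_mem hs ht, a' * b', mul_mem ha' hb', ?_⟩
    rw [map_mul, map_mul, ea, eb, mul_comm t s]
  · intro g hg i j hij r
    obtain ⟨u, v, w, huv, hwv, hform⟩ := conj_form_map Polynomial.C g i j hij
    obtain ⟨s1, hs1, r', hr'⟩ := H.poly r
    obtain ⟨su, hsu, u', hu'⟩ := H.fam Finset.univ u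
    obtain ⟨sv, hsv, v', hv'⟩ := H.fam Finset.univ v
    obtain ⟨sw, hsw, w', hw'⟩ := H.fam Finset.univ w
    set s := s1 * su * sv * sw * sv with hs
    refine ⟨s, ?_, ?_⟩
    · exact mul_mem (mul_mem (mul_mem (mul_mem hs1 hsu) hsv) hsw) hsv
    obtain ⟨q, hq, hqv⟩ := isE_suslin hn (fun a => Polynomial.C (v' a))
      (fun k l => Polynomial.X * sc s r' * Polynomial.C (w' k * u' l))
    refine ⟨q, hq, ?_⟩
    rw [map_mul, map_mul, map_inv, glMap_tv, glMap_glMap, sc_comp_C]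
    apply Units.ext
    rw [hform, coe_glMap, hqv, map_mul, sc_X]
    have hr2 : (sc s r').map φ = Polynomial.C (φ s1) * sc (φ s) r := by
      have := congrArg (fun f => f r') (sc_map φ s)
      simp only [RingHom.comp_apply, Polynomial.coe_mapRingHom] at this
      rw [← this, hr', map_mul, sc_C]
    have hw := suslin_comb u v w huv hwv
    have hφs : φ s = φ s1 * φ su * φ sv * φ sw * φ sv := by simp [hs]
    generalize sc (φ s) r = y at *
    generalize sc s r' = z at *
    rw [hφs]
    ext1 a b
    rw [Matrix.map_apply, Matrix.add_apply, Matrix.add_apply, map_add]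
    congr 1
    · rw [Matrix.one_apply, Matrix.one_apply]; split_ifs <;> simp
    rw [Matrix.vecMulVec_apply, Matrix.vecMulVec_apply, map_mul, Pi.smul_apply, smul_eq_mul]
    have hwb : w b = ∑ k, ∑ l, (w k * u l) * (v l * Pi.single (M := fun _ => S) k 1 b - v k * Pi.single (M := fun _ => S) l 1 b) := by
      conv_lhs => rw [hw]
      simp [Finset.sum_apply]
    rw [hwb]
    simp only [Finset.sum_apply, Pi.smul_apply, Pi.sub_apply, smul_eq_mul, map_sum, Finset.mul_sum]
    refine Finset.sum_congr rfl fun k _ => Finset.sum_congr rfl fun l _ => ?_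
    simp only [map_mul, map_sub, Polynomial.coe_mapRingHom, Polynomial.map_X, Polynomial.map_C, Polynomial.map_sub, Polynomial.map_mul, hr2,
      hu' _ (Finset.mem_univ _), hv' _ (Finset.mem_univ _), hw' _ (Finset.mem_univ _), Pi.single_apply]
    split_ifs <;> simp <;> ring

end Dilation


open Matrix

section Patching

variable {n : ℕ} {R S : Type*} [CommRing R] [CommRing S]

theorem gg {T : Type*} [CommRing T] {f : R →+* S} {f' : S →+* T} {f'' : R →+* T} (h : f'.comp f = f'')
    (g : GL (Fin n) R) : glMap f' (glMap f g) = glMap f'' g := by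
  rw [glMap_glMap, h]

/-- the diagonal matrix with `X` at place `i`. -/
noncomputable def Dl (i : Fin n) : Matrix (Fin n) (Fin n) (Polynomial R) :=
  Matrix.diagonal (fun k => if k = i then Polynomial.X else 1)

theorem shift (hn : 3 ≤ n) (i : Fin n) {p : GL (Fin n) (Polynomial R)}
    (hp : p ∈ elemGL n (Polynomial R)) (h0 : glMap (Polynomial.evalRingHom 0) p = 1) :
    ∃ q ∈ elemGL n (Polynomial R), q.val * Dl i = Dl i * p.val := by
  refine gen0 (P := fun p => ∃ q ∈ elemGL n (Polynomial R), q.val * Dl i = Dl i * p.val)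
    ?_ ?_ ?_ hp h0
  · exact ⟨1, one_mem _, by simp⟩
  · rintro a b ⟨qa, hqa, ha⟩ ⟨qb, hqb, hb⟩
    refine ⟨qa * qb, mul_mem hqa hqb, ?_⟩
    rw [Units.val_mul, Units.val_mul, mul_assoc, hb, ← mul_assoc, ha, mul_assoc]
  · intro g hg i' j' hij r
    obtain ⟨u, v, w, huv, hwv, hform⟩ := conj_form_map Polynomial.C g i' j' hij
    let δ : Fin n → Polynomial R := fun k => if k = i then Polynomial.X else 1
    let τ : Fin n → Fin n → Polynomial R := fun k l => if k = i then 1 else if l = i then 1 else Polynomial.X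
    have hδτ : ∀ k l, k ≠ l → δ k * δ l * τ k l = Polynomial.X := by
      intro k l hkl
      simp only [δ, τ]
      split_ifs with h1 h2
      · exact absurd (h1.trans h2.symm) hkl
      · simp
      · simp
      · simp
    obtain ⟨q, hq, hqv⟩ := isE_suslin hn (fun a => δ a * Polynomial.C (v a))
      (fun k l => r * Polynomial.C (w k * u l) * τ k l)
    refine ⟨q, hq, ?_⟩
    rw [hform, hqv, mul_add, add_mul, one_mul, mul_one]
    congr 1
    ext1 a b
    have hD : (Dl i : Matrix (Fin n) (Fin n) (Polynomial R)) = Matrix.diagonal δ := rfl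
    rw [hD, Matrix.mul_diagonal, Matrix.diagonal_mul, Matrix.vecMulVec_apply, Matrix.vecMulVec_apply,
      Pi.smul_apply, smul_eq_mul]
    have hwb : w b = ∑ k, ∑ l, (w k * u l) * (v l * Pi.single (M := fun _ => R) k 1 b -
        v k * Pi.single (M := fun _ => R) l 1 b) := by
      conv_lhs => rw [suslin_comb u v w huv hwv]
      simp [Finset.sum_apply]
    rw [hwb]
    simp only [Finset.sum_apply, Pi.smul_apply, Pi.sub_apply, smul_eq_mul, map_sum, Finset.mul_sum,
      Finset.sum_mul]
    refine Finset.sum_congr rfl fun k _ => Finset.sum_congr rfl fun l _ => ?_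
    by_cases hkl : k = l
    · subst hkl; simp
    · have := hδτ k l hkl
      simp only [map_mul, map_sub, Pi.single_apply]
      split_ifs with h1 h2 h2
      · exact absurd (h1.symm.trans h2) hkl
      · subst h1
        rw [← this]; simp; ring
      · subst h2
        rw [← this]; simp; ring
      · simp

theorem dilation1 (hn : 3 ≤ n) {φ : R →+* S} {M : Submonoid R} (H : HasDen φ M)
    {h : GL (Fin n) (Polynomial S)} (hh : h ∈ elemGL n (Polynomial S))
    (h0 : glMap (Polynomial.evalRingHom 0) h = 1) : ∃ s ∈ M, ∃ h' ∈ elemGL n (Polynomial R),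
      glMap (Polynomial.evalRingHom 0) h' = 1 ∧
      glMap (Polynomial.mapRingHom φ) h' = glMap (sc (φ s)) h := by
  obtain ⟨s, hs, h', hh', e⟩ := dilation hn H hh h0
  have e0 : (Polynomial.evalRingHom (0 : R)).comp Polynomial.C = RingHom.id R := by ext; simp
  have e1 : (Polynomial.mapRingHom φ).comp Polynomial.C = Polynomial.C.comp φ := by ext; simp
  have e2 : φ.comp (Polynomial.evalRingHom 0) = (Polynomial.evalRingHom 0).comp (Polynomial.mapRingHom φ) := by
    ext <;> simp
  have e3 : (Polynomial.evalRingHom 0).comp (sc (φ s)) = Polynomial.evalRingHom 0 := by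
    ext <;> simp [sc_C, sc_X]
  refine ⟨s, hs, h' * (glMap Polynomial.C (glMap (Polynomial.evalRingHom 0) h'))⁻¹,
    mul_mem hh' (inv_mem (glMap_mem _ (glMap_mem _ hh'))), ?_, ?_⟩
  · rw [map_mul, map_inv, gg e0, glMap_id, mul_inv_cancel]
  · rw [map_mul, map_inv, gg e1, ← gg rfl, gg e2, ← gg rfl, e, gg e3, h0]
    simp

/-- kernel condition -/
def KerDen (φ : R →+* S) (M : Submonoid R) : Prop := ∀ r, φ r = 0 → ∃ s ∈ M, s * r = 0

theorem KerDen.fam {φ : R →+* S} {M : Submonoid R} (H : KerDen φ M) {ι : Type*} (t : Finset ι)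
    (v : ι → R) (hv : ∀ i, φ (v i) = 0) : ∃ s ∈ M, ∀ i ∈ t, s * v i = 0 := by
  classical
  choose s hs r using fun i => H (v i) (hv i)
  refine ⟨∏ i ∈ t, s i, prod_mem fun i _ => hs i, ?_⟩
  intro i hi
  rw [← Finset.prod_erase_mul t s hi, mul_assoc, r, mul_zero]

theorem KerDen.poly {φ : R →+* S} {M : Submonoid R} (H : KerDen φ M) :
    KerDen (Polynomial.mapRingHom φ) (M.map (Polynomial.C : R →+* Polynomial R)) := by
  intro p hp
  obtain ⟨s, hs, h⟩ := H.fam p.support (fun i => p.coeff i) (fun i => by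
    have := congrArg (fun q => Polynomial.coeff q i) hp
    simpa using this)
  refine ⟨Polynomial.C s, ⟨s, hs, rfl⟩, ?_⟩
  ext i
  rw [Polynomial.coeff_C_mul, Polynomial.coeff_zero]
  by_cases hi : i ∈ p.support
  · exact h i hi
  · rw [Polynomial.notMem_support_iff.mp hi, mul_zero]

theorem HasDen.poly' {φ : R →+* S} {M : Submonoid R} (H : HasDen φ M) :
    HasDen (Polynomial.mapRingHom φ) (M.map (Polynomial.C : R →+* Polynomial R)) := by
  intro p
  obtain ⟨s, hs, r, hr⟩ := H.poly p
  exact ⟨Polynomial.C s, ⟨s, hs, rfl⟩, r, by simp [hr]⟩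

theorem coeff_sc (s : R) (p : Polynomial R) (k : ℕ) : (sc s p).coeff k = s ^ k * p.coeff k := by
  have : sc s p = p.comp (Polynomial.C s * Polynomial.X) := rfl
  rw [this, Polynomial.comp_C_mul_X_coeff, mul_comm]

theorem ker_eq {φ : R →+* S} {M : Submonoid R} (H : KerDen φ M) (a b : GL (Fin n) (Polynomial R))
    (h0 : glMap (Polynomial.evalRingHom 0) a = glMap (Polynomial.evalRingHom 0) b)
    (h : glMap (Polynomial.mapRingHom φ) a = glMap (Polynomial.mapRingHom φ) b) :
    ∃ s ∈ M, glMap (sc s) a = glMap (sc s) b := by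
  obtain ⟨s', ⟨s, hs, rfl⟩, hk⟩ := H.poly.fam Finset.univ
    (fun x : Fin n × Fin n => a.val x.1 x.2 - b.val x.1 x.2) (fun x => by
      have := congrArg (fun z : GL (Fin n) (Polynomial S) => z.val x.1 x.2) h
      simp only [coe_glMap, Matrix.map_apply] at this
      rw [map_sub, this, sub_self])
  refine ⟨s, hs, ?_⟩
  apply Units.ext
  ext1 i j
  have h1 := hk (i, j) (Finset.mem_univ _)
  have h2 := congrArg (fun z : GL (Fin n) R => z.val i j) h0
  simp only [coe_glMap, Matrix.map_apply] at h2 ⊢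
  ext k
  rw [coeff_sc, coeff_sc]
  cases k with
  | zero =>
    simp only [Polynomial.coe_evalRingHom, ← Polynomial.coeff_zero_eq_eval_zero] at h2
    rw [h2]
  | succ k =>
    have h3 : (Polynomial.C s * (a.val i j - b.val i j)).coeff (k + 1) = 0 := by
      have h1' : Polynomial.C s * (a.val i j - b.val i j) = 0 := h1
      rw [h1', Polynomial.coeff_zero]
    rw [Polynomial.coeff_C_mul, Polynomial.coeff_sub] at h3
    rw [pow_succ, ← sub_eq_zero, ← mul_sub, mul_assoc]
    have h4 : s * ((a.val i j).coeff (k + 1) - (b.val i j).coeff (k + 1)) = 0 := h3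
    rw [h4, mul_zero]

open Polynomial in
/-- The substitution `X ↦ T + X`. -/
noncomputable def addVar (R : Type*) [CommRing R] : R[X] →+* R[X][X] :=
  Polynomial.eval₂RingHom (Polynomial.C.comp Polynomial.C) (Polynomial.C Polynomial.X + Polynomial.X)

theorem addVar_map (φ : R →+* S) : (Polynomial.mapRingHom (Polynomial.mapRingHom φ)).comp (addVar R) =
    (addVar S).comp (Polynomial.mapRingHom φ) := by
  ext <;> simp [addVar]

theorem map_comp_C (φ : R →+* S) : (Polynomial.mapRingHom φ).comp Polynomial.C = Polynomial.C.comp φ := by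
  ext; simp

theorem ev_addVar : (Polynomial.evalRingHom 0).comp (addVar R) = RingHom.id _ := by
  ext <;> simp [addVar]

theorem ev_C (r : R) : (Polynomial.evalRingHom r).comp Polynomial.C = RingHom.id _ := by
  ext; simp

theorem local_global (hn : 3 ≤ n) {A : Type*} [CommRing A] (g : GL (Fin n) (Polynomial A))
    (H : ∀ (m : Ideal A) [m.IsMaximal],
      glMap (Polynomial.mapRingHom (algebraMap A (Localization.AtPrime m))) g ∈
        elemGL n (Polynomial (Localization.AtPrime m))) :
    g * (glMap Polynomial.C (glMap (Polynomial.evalRingHom 0) g))⁻¹ ∈ elemGL n (Polynomial A) := by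
  let ev : Polynomial A → (Polynomial A →+* Polynomial A) := fun u => Polynomial.eval₂RingHom Polynomial.C u
  let I : Ideal A :=
    { carrier := {a | ∀ u c : Polynomial A,
        glMap (ev (u + Polynomial.C a * c)) g * (glMap (ev u) g)⁻¹ ∈ elemGL n (Polynomial A)}
      add_mem' := by
        intro a b ha hb u c
        have h1 := ha u c
        have h2 := hb (u + Polynomial.C a * c) c
        have := mul_mem h2 h1
        rw [map_add, add_mul, ← add_assoc]
        convert this using 1
        group
      zero_mem' := by intro u c; simp
      smul_mem' := by
        intro r a ha u c
        have := ha u (Polynomial.C r * c)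
        convert this using 5
        simp; ring }
  have hI : I = ⊤ := by
    by_contra hI
    obtain ⟨m, hm, hIm⟩ := Ideal.exists_le_maximal I hI
    set φ := algebraMap A (Localization.AtPrime m) with hφ
    have hD : HasDen φ m.primeCompl := by
      intro c
      obtain ⟨⟨r, s⟩, h⟩ := IsLocalization.surj m.primeCompl c
      exact ⟨s, s.2, r, by rw [← h, mul_comm]⟩
    have hK : KerDen φ m.primeCompl := by
      intro r hr
      obtain ⟨s, hs⟩ := (IsLocalization.map_eq_zero_iff m.primeCompl _ r).mp hr
      exact ⟨s, s.2, hs⟩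
    set h := glMap (addVar A) g * (glMap Polynomial.C g)⁻¹ with hh
    have h0 : glMap (Polynomial.evalRingHom 0) h = 1 := by
      rw [hh, map_mul, map_inv, glMap_glMap, glMap_glMap, ev_addVar, ev_C]; simp
    have hm' : glMap (Polynomial.mapRingHom (Polynomial.mapRingHom φ)) h ∈
        elemGL n (Polynomial (Polynomial (Localization.AtPrime m))) := by
      rw [hh, map_mul, map_inv, glMap_glMap, addVar_map, glMap_glMap, map_comp_C, ← glMap_glMap,
        ← glMap_glMap]
      exact mul_mem (glMap_mem _ (H m)) (inv_mem (glMap_mem _ (H m)))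
    have e2 : ∀ {R S : Type _} [CommRing R] [CommRing S] (φ : R →+* S),
        (Polynomial.evalRingHom 0).comp (Polynomial.mapRingHom φ) = φ.comp (Polynomial.evalRingHom 0) := by
      intros; ext <;> simp
    obtain ⟨s', ⟨s, hs, rfl⟩, h', hh', h'0, he⟩ := dilation1 hn hD.poly' hm' (by
      rw [glMap_glMap, e2, ← glMap_glMap, h0, map_one])
    have he : glMap (S := Polynomial (Polynomial (Localization.AtPrime m))) (Polynomial.mapRingHom (Polynomial.mapRingHom φ)) h' =
      glMap (S := Polynomial (Polynomial (Localization.AtPrime m))) (Polynomial.mapRingHom (Polynomial.mapRingHom φ)) (glMap (sc (Polynomial.C s)) h) := by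
      rw [gg (sc_map (Polynomial.mapRingHom φ) (Polynomial.C s)).symm, ← gg rfl]
      exact he
    obtain ⟨t', ⟨t, ht, rfl⟩, hEq⟩ := ker_eq hK.poly h' (glMap (sc (Polynomial.C s)) h) (by
      rw [h'0, glMap_glMap]
      have : (Polynomial.evalRingHom 0).comp (sc (Polynomial.C s)) = Polynomial.evalRingHom 0 := by
        ext <;> simp [sc_C, sc_X]
      rw [this, h0]) he
    have hst : s * t ∈ I := by
      intro u c
      have h1 := glMap_mem (Polynomial.eval₂RingHom (ev u) c) (glMap_mem (sc (Polynomial.C t)) hh')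
      have hEq' : glMap (sc (Polynomial.C t)) h' = _ := hEq
      rw [hEq', hh] at h1
      simp only [map_mul, map_inv, glMap_glMap] at h1
      have k1 : ((Polynomial.eval₂RingHom (ev u) c).comp ((sc (Polynomial.C t)).comp ((sc (Polynomial.C s)).comp (addVar A)))) = ev (u + Polynomial.C (s * t) * c) := by
        apply Polynomial.ringHom_ext
        · intro x
          simp [ev, sc, addVar]
        · simp [ev, sc, addVar]
          ring
      have k2 : ((Polynomial.eval₂RingHom (ev u) c).comp ((sc (Polynomial.C t)).comp ((sc (Polynomial.C s)).comp Polynomial.C))) = ev u := by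
        ext <;> simp [ev, sc]
      rw [k1, k2] at h1
      exact h1
    exact (mul_mem hs ht : s * t ∈ m.primeCompl) (hIm hst)
  have h1 : (1 : A) ∈ I := by rw [hI]; trivial
  have := h1 0 Polynomial.X
  rw [glMap_glMap]
  convert this using 3
  · have : ev (0 + Polynomial.C 1 * Polynomial.X) = RingHom.id _ := by ext <;> simp [ev]
    rw [this, glMap_id]
  · have : ev 0 = Polynomial.C.comp (Polynomial.evalRingHom 0) := by ext <;> simp [ev]
    rw [this]

theorem exists_path {e : GL (Fin n) S} (he : e ∈ elemGL n S) :
    ∃ p ∈ elemGL n (Polynomial S), glMap (Polynomial.evalRingHom 0) p = 1 ∧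
      glMap (Polynomial.evalRingHom 1) p = e := by
  refine elem_induct (P := fun e => ∃ p ∈ elemGL n (Polynomial S),
    glMap (Polynomial.evalRingHom 0) p = 1 ∧ glMap (Polynomial.evalRingHom 1) p = e) ?_ ?_ he
  · exact ⟨1, one_mem _, map_one _, map_one _⟩
  · rintro i j h c g hg ⟨p, hp, h0, h1⟩
    refine ⟨tv i j h (Polynomial.C c * Polynomial.X) * p, mul_mem (tv_mem _ _ _ _) hp, ?_, ?_⟩
    · rw [map_mul, glMap_tv, h0]; simp [tv_zero]
    · rw [map_mul, glMap_tv, h1]; simp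

theorem gluing (hn : 3 ≤ n) {B R1 R2 : Type*} [CommRing B] [CommRing R1] [CommRing R2]
    (φ1 : R1 →+* S) (φ2 : R2 →+* S) (ψ1 : B →+* R1) (ψ2 : B →+* R2)
    (hc : φ1.comp ψ1 = φ2.comp ψ2) (a b : B) (hab : IsCoprime a b)
    (H1 : HasDen φ1 (Submonoid.powers (ψ1 b))) (H2 : HasDen φ2 (Submonoid.powers (ψ2 a)))
    {e : GL (Fin n) S} (he : e ∈ elemGL n S) :
    ∃ e1 ∈ elemGL n R1, ∃ e2 ∈ elemGL n R2, e = glMap φ1 e1 * glMap φ2 e2 := by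
  obtain ⟨p, hp, hp0, hp1⟩ := exists_path he
  obtain ⟨_, ⟨N, rfl⟩, p2, hp2, -, hpe⟩ := dilation1 hn H2 hp hp0
  set h := glMap (addVar S) p * (glMap Polynomial.C p)⁻¹ with hh
  have hhm : h ∈ elemGL n _ := mul_mem (glMap_mem _ hp) (inv_mem (glMap_mem _ hp))
  have h0 : glMap (Polynomial.evalRingHom 0) h = 1 := by
    rw [hh, map_mul, map_inv, glMap_glMap, glMap_glMap, ev_addVar, ev_C]; simp
  obtain ⟨_, ⟨_, ⟨M, rfl⟩, rfl⟩, h1, hh1, -, hhe⟩ := dilation1 hn H1.poly' hhm h0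
  obtain ⟨r, s, hrs⟩ := (hab.pow : IsCoprime (a ^ N) (b ^ M))
  refine ⟨glMap (Polynomial.eval₂RingHom (Polynomial.evalRingHom (ψ1 (r * a ^ N))) (ψ1 s)) h1,
    glMap_mem _ hh1, glMap (Polynomial.evalRingHom (ψ2 r)) p2, glMap_mem _ hp2, ?_⟩
  have hcc : ∀ x, φ1 (ψ1 x) = φ2 (ψ2 x) := fun x => congrArg (fun f => f x) hc
  have k1 : φ1.comp (Polynomial.eval₂RingHom (Polynomial.evalRingHom (ψ1 (r * a ^ N))) (ψ1 s)) =
    (Polynomial.eval₂RingHom (Polynomial.evalRingHom (φ1 (ψ1 (r * a ^ N)))) (φ1 (ψ1 s))).comp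
      (Polynomial.mapRingHom (Polynomial.mapRingHom φ1)) := by
    ext <;> simp
  have k2 : φ2.comp (Polynomial.evalRingHom (ψ2 r)) =
    (Polynomial.evalRingHom (φ2 (ψ2 r))).comp (Polynomial.mapRingHom φ2) := by
    ext <;> simp
  have hpe' : glMap (Polynomial.mapRingHom φ2) p2 = glMap (sc (φ2 (ψ2 a) ^ N)) p := by
    rw [hpe]; simp
  have hhe' : glMap (S := Polynomial (Polynomial S)) (Polynomial.mapRingHom (Polynomial.mapRingHom φ1)) h1 =
      glMap (sc (Polynomial.C (φ1 (ψ1 b) ^ M))) h := by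
    have hσ : Polynomial.mapRingHom φ1 (Polynomial.C (ψ1 b ^ M)) = Polynomial.C (φ1 (ψ1 b) ^ M) := by
      simp
    rw [← hσ]
    exact hhe
  rw [gg k1, gg k2, ← gg (f := Polynomial.mapRingHom (Polynomial.mapRingHom φ1)) rfl,
    ← gg (f := Polynomial.mapRingHom φ2) rfl, hpe', hhe', hh]
  set θ := Polynomial.eval₂RingHom (Polynomial.evalRingHom (φ1 (ψ1 (r * a ^ N)))) (φ1 (ψ1 s)) with hθ
  have hrs' := congrArg (fun x => φ1 (ψ1 x)) hrs
  simp only [map_add, map_mul, map_pow, map_one] at hrs'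
  have j1 : θ.comp ((sc (Polynomial.C (φ1 (ψ1 b) ^ M))).comp (addVar S)) = Polynomial.evalRingHom (1 : S) := by
    apply Polynomial.ringHom_ext
    · intro x
      simp [sc, addVar, hθ]
    · rw [RingHom.comp_apply, RingHom.comp_apply]
      have : addVar S Polynomial.X = Polynomial.C Polynomial.X + Polynomial.X := by simp [addVar]
      rw [this, map_add, sc_C, sc_X, map_add, map_mul, hθ]
      simp only [Polynomial.coe_eval₂RingHom, Polynomial.eval₂_C, Polynomial.eval₂_X,
        Polynomial.coe_evalRingHom, Polynomial.eval_X, Polynomial.eval_C, map_mul, map_pow]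
      rw [← hrs']
      ring
  have j2 : θ.comp ((sc (Polynomial.C (φ1 (ψ1 b) ^ M))).comp Polynomial.C) =
      (Polynomial.evalRingHom (φ2 (ψ2 r))).comp (sc (φ2 (ψ2 a) ^ N)) := by
    apply Polynomial.ringHom_ext
    · intro x
      simp [sc, hθ]
    · simp only [RingHom.comp_apply, sc_C, sc_X, map_mul, hθ]
      simp only [Polynomial.coe_eval₂RingHom, Polynomial.eval₂_C, Polynomial.eval₂_X,
        Polynomial.coe_evalRingHom, Polynomial.eval_X, Polynomial.eval_C, map_mul, map_pow, hcc]
      ring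
  simp only [map_mul, map_inv, glMap_glMap]
  rw [j1, j2, hp1]
  simp

end Patching


section LaurentBasics

open LaurentPolynomial Matrix

variable {n : ℕ} {A B : Type*} [CommRing A] [CommRing B]

/-- Laurent polynomial ring. -/
abbrev Lr (A : Type*) [CommRing A] := LaurentPolynomial A

/-- the inclusion `A[X] → A[T,T⁻¹]`, `X ↦ T`. -/
noncomputable def ip (A : Type*) [CommRing A] : Polynomial A →+* Lr A := Polynomial.toLaurent

/-- the inversion automorphism. -/
noncomputable def iv (A : Type*) [CommRing A] : Lr A →+* Lr A :=
  (LaurentPolynomial.invert : LaurentPolynomial A ≃ₐ[A] LaurentPolynomial A).toRingEquiv.toRingHom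

/-- the inclusion `A[X] → A[T,T⁻¹]`, `X ↦ T⁻¹`. -/
noncomputable def im (A : Type*) [CommRing A] : Polynomial A →+* Lr A := (iv A).comp (ip A)

/-- constants -/
noncomputable def cL (A : Type*) [CommRing A] : A →+* Lr A := LaurentPolynomial.C

/-- base change -/
noncomputable def lm (φ : A →+* B) : Lr A →+* Lr B := AddMonoidAlgebra.mapRingHom ℤ φ

theorem iv_C (a : A) : iv A (LaurentPolynomial.C a) = LaurentPolynomial.C a := by
  simp [iv]

theorem iv_T (a : ℤ) : iv A (LaurentPolynomial.T a) = LaurentPolynomial.T (-a) := by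
  simp [iv]

theorem ip_C : (ip A).comp Polynomial.C = cL A := by ext <;> simp [ip, cL]
theorem im_C : (im A).comp Polynomial.C = cL A := by
  apply RingHom.ext; intro x
  simp [im, ip, cL, iv_C]
theorem iv_ip : (iv A).comp (ip A) = im A := rfl
theorem iv_iv : (iv A).comp (iv A) = RingHom.id _ := by
  apply RingHom.ext; intro x
  induction x using LaurentPolynomial.induction_on' with
  | add p q hp hq => rw [map_add, hp, hq, map_add]
  | C_mul_T n a => simp [iv_C, iv_T]
theorem iv_im : (iv A).comp (im A) = ip A := by
  rw [im, ← RingHom.comp_assoc, iv_iv, RingHom.id_comp]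
theorem iv_cL : (iv A).comp (cL A) = cL A := by
  apply RingHom.ext; intro x
  simp [cL, iv_C]

theorem ip_X : ip A Polynomial.X = T 1 := by simp [ip]
theorem im_X : im A Polynomial.X = T (-1) := by simp [im, ip, iv_T]
theorem ip_inj : Function.Injective (ip A) := Polynomial.toLaurent_injective

theorem lm_C (φ : A →+* B) (a : A) : lm φ (LaurentPolynomial.C a) = LaurentPolynomial.C (φ a) := by
  rw [← LaurentPolynomial.single_eq_C, ← LaurentPolynomial.single_eq_C]
  simp [lm, -single_eq_C_mul_T]
theorem lm_T (φ : A →+* B) (a : ℤ) : lm φ (LaurentPolynomial.T a) = LaurentPolynomial.T a := by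
  rw [LaurentPolynomial.T, LaurentPolynomial.T]
  simp [lm, -single_eq_C_mul_T]

theorem lm_ip (φ : A →+* B) : (lm φ).comp (ip A) = (ip B).comp (Polynomial.mapRingHom φ) := by
  apply Polynomial.ringHom_ext
  · intro a; simp [ip, lm_C]
  · simp [ip, lm_T]
theorem lm_im (φ : A →+* B) : (lm φ).comp (im A) = (im B).comp (Polynomial.mapRingHom φ) := by
  apply Polynomial.ringHom_ext
  · intro a; simp [im, ip, lm_C, iv_C]
  · simp [im, ip, lm_T, iv_T]

theorem trunc_neg (e : ℤ) (he : e < 0) (q : Polynomial A) : trunc (T e * im A q) = 0 := by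
  induction q using Polynomial.induction_on' with
  | add p q hp hq => rw [map_add, mul_add, map_add, hp, hq, add_zero]
  | monomial k a =>
    have : T e * im A (Polynomial.monomial k a) = LaurentPolynomial.C a * T (e - k) := by
      simp only [im, ip, RingHom.comp_apply, Polynomial.toLaurent_C_mul_T, map_mul, iv_C, iv_T]
      rw [T_sub]; ring
    rw [this, trunc_C_mul_T, if_neg (by omega)]

theorem trunc_zero (q : Polynomial A) : trunc (im A q) = Polynomial.C (q.eval 0) := by
  induction q using Polynomial.induction_on' with
  | add p q hp hq => rw [map_add, map_add, hp, hq]; simp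
  | monomial k a =>
    have : im A (Polynomial.monomial k a) = LaurentPolynomial.C a * T (-k) := by
      simp only [im, ip, RingHom.comp_apply, Polynomial.toLaurent_C_mul_T, map_mul, iv_C, iv_T]
    rw [this, trunc_C_mul_T]
    rcases Nat.eq_zero_or_pos k with rfl | hk
    · simp
    · rw [if_neg (by omega)]
      simp [hk.ne']

theorem ip_eq_im {g h : GL (Fin n) (Polynomial A)} (he : glMap (ip A) g = glMap (im A) h) :
    g = glMap Polynomial.C (glMap (Polynomial.evalRingHom 0) h) := by
  apply Units.ext; ext1 i j
  have := congrArg (fun z : GL (Fin n) (Lr A) => trunc (z.val i j)) he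
  simp only [coe_glMap, Matrix.map_apply] at this ⊢
  rw [trunc_zero] at this
  rw [Polynomial.coe_evalRingHom, ← this]
  simp [ip]

theorem im_eq_ip {g h : GL (Fin n) (Polynomial A)} (he : glMap (ip A) g = glMap (im A) h) :
    h = glMap Polynomial.C (glMap (Polynomial.evalRingHom 0) g) := by
  apply ip_eq_im
  rw [← gg iv_im h, ← gg (iv_ip (A := A)) g, he]

/-- diagonal matrices -/
noncomputable def DD (d : Fin n → ℤ) : GL (Fin n) (Lr A) where
  val := Matrix.diagonal fun i => T (d i)
  inv := Matrix.diagonal fun i => T (-d i)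
  val_inv := by
    rw [Matrix.diagonal_mul_diagonal, ← Matrix.diagonal_one]
    congr; ext i : 1; rw [← T_add]; simp
  inv_val := by
    rw [Matrix.diagonal_mul_diagonal, ← Matrix.diagonal_one]
    congr; ext i : 1; rw [← T_add]; simp

theorem DD_val (d : Fin n → ℤ) : (DD d : GL (Fin n) (Lr A)).val = Matrix.diagonal fun i => T (d i) := rfl

theorem DD_add (d e : Fin n → ℤ) : (DD (d + e) : GL (Fin n) (Lr A)) = DD d * DD e := by
  apply Units.ext
  rw [Units.val_mul, DD_val, DD_val, DD_val, Matrix.diagonal_mul_diagonal]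
  congr; ext i : 1; rw [← T_add]; simp

theorem DD_zero : (DD 0 : GL (Fin n) (Lr A)) = 1 := by
  apply Units.ext
  rw [DD_val]; simp

theorem DD_neg (d : Fin n → ℤ) : (DD (-d) : GL (Fin n) (Lr A)) = (DD d)⁻¹ := by
  rw [eq_inv_iff_mul_eq_one, ← DD_add, neg_add_cancel, DD_zero]

theorem DD_iv (d : Fin n → ℤ) : glMap (iv A) (DD d) = DD (-d) := by
  apply Units.ext
  rw [coe_glMap, DD_val, DD_val, Matrix.diagonal_map (map_zero _)]
  congr; ext i : 1; simp [iv_T]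

theorem DD_lm (φ : A →+* B) (d : Fin n → ℤ) : glMap (lm φ) (DD d) = DD d := by
  apply Units.ext
  rw [coe_glMap, DD_val, DD_val, Matrix.diagonal_map (map_zero _)]
  congr; ext i : 1; simp [lm_T]

theorem DD_const (z : ℤ) (g : GL (Fin n) (Lr A)) : DD (fun _ => z) * g = g * DD (fun _ => z) := by
  apply Units.ext
  rw [Units.val_mul, Units.val_mul, DD_val]
  ext1 i j
  rw [Matrix.diagonal_mul, Matrix.mul_diagonal, mul_comm]

theorem DD_tv (d : Fin n → ℤ) (i j : Fin n) (h : i ≠ j) (c : Lr A) :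
    DD d * tv i j h c = tv i j h (T (d i - d j) * c) * DD d := by
  apply Units.ext
  rw [Units.val_mul, Units.val_mul, DD_val, coe_tv, coe_tv]
  ext1 a b
  rw [Matrix.diagonal_mul, Matrix.mul_diagonal, Matrix.add_apply, Matrix.add_apply, Matrix.one_apply,
    Matrix.single_apply, Matrix.single_apply]
  split_ifs with h1 h2 h2
  · exact absurd (h2.1.trans (h1.trans h2.2.symm)) h
  · subst h1; ring
  · obtain ⟨rfl, rfl⟩ := h2
    rw [zero_add, zero_add, T_sub]
    have : (T (-d j) : Lr A) * T (d j) = 1 := by rw [← T_add]; simp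
    linear_combination (- T (d i) * c) * this
  · simp

/-- all `DD d` lie in a subgroup containing the basic ones -/
theorem DD_mem (H : Subgroup (GL (Fin n) (Lr A))) (h : ∀ i, DD (Pi.single i 1) ∈ H) (d : Fin n → ℤ) :
    DD d ∈ H := by
  let P : AddSubgroup (Fin n → ℤ) :=
    { carrier := {d | DD d ∈ H}
      add_mem' := by
        intro a b ha hb
        change DD (a + b) ∈ H
        rw [DD_add]; exact mul_mem ha hb
      zero_mem' := by change DD 0 ∈ H; rw [DD_zero]; exact one_mem _
      neg_mem' := by
        intro a ha
        change DD (-a) ∈ H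
        rw [DD_neg]; exact inv_mem ha }
  have : d ∈ P := by
    rw [← Finset.univ_sum_single d]
    refine sum_mem fun i _ => ?_
    have h1 : (Pi.single i (d i) : Fin n → ℤ) = d i • Pi.single i 1 := by
      rw [← Pi.single_smul]; simp
    rw [h1]
    exact P.zsmul_mem (show Pi.single i 1 ∈ P from h i) _
  exact this

theorem Dl_map (i : Fin n) : (Dl i : Matrix (Fin n) (Fin n) (Polynomial A)).map (ip A) =
    (DD (Pi.single i 1) : GL (Fin n) (Lr A)).val := by
  rw [DD_val, Dl, Matrix.diagonal_map (map_zero _)]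
  congr; ext k : 1
  by_cases h : k = i
  · subst h; simp [ip_X]
  · simp [h]

theorem toL {i j : Fin n} {p q : GL (Fin n) (Polynomial A)} (h : q.val * Dl i = Dl j * p.val) :
    glMap (ip A) q * DD (Pi.single i 1) = DD (Pi.single j 1) * glMap (ip A) p := by
  apply Units.ext
  rw [Units.val_mul, Units.val_mul, ← Dl_map, ← Dl_map, coe_glMap, coe_glMap, ← Matrix.map_mul,
    ← Matrix.map_mul, h]

theorem toL' {i : Fin n} {p q : GL (Fin n) (Polynomial A)} (h : Dl i * q.val = p.val * Dl i) :
    DD (Pi.single i 1) * glMap (ip A) q = glMap (ip A) p * DD (Pi.single i 1) := by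
  apply Units.ext
  rw [Units.val_mul, Units.val_mul, ← Dl_map, coe_glMap, coe_glMap, ← Matrix.map_mul,
    ← Matrix.map_mul, h]

theorem shift' (hn : 3 ≤ n) (i : Fin n) {p : GL (Fin n) (Polynomial A)}
    (hp : p ∈ elemGL n (Polynomial A)) (h0 : glMap (Polynomial.evalRingHom 0) p = 1) :
    ∃ q ∈ elemGL n (Polynomial A), Dl i * q.val = p.val * Dl i := by
  obtain ⟨p', hp', hpe⟩ := IsE.transpose ⟨p, hp, rfl⟩
  obtain ⟨q', hq', hqe⟩ := shift hn i hp' (by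
    apply Units.ext
    rw [coe_glMap, hpe]
    have := congrArg (fun z : GL (Fin n) A => z.valᵀ) h0
    simp only [coe_glMap] at this
    rw [Matrix.transpose_map, this]; simp)
  obtain ⟨q, hq, hqe'⟩ := IsE.transpose ⟨q', hq', rfl⟩
  refine ⟨q, hq, ?_⟩
  have := congrArg Matrix.transpose hqe
  rw [Matrix.transpose_mul, Matrix.transpose_mul, hpe, Matrix.transpose_transpose, ← hqe'] at this
  simpa [Dl] using this

theorem Dl_cancel (i : Fin n) (M N : Matrix (Fin n) (Fin n) (Polynomial A)) (h : M * Dl i = N * Dl i) : M = N := by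
  ext1 a b
  have := congrFun (congrFun h a) b
  rw [Dl, Matrix.mul_diagonal, Matrix.mul_diagonal] at this
  split_ifs at this with hb
  · exact (by have h2 := Polynomial.isRegular_X (R := A); exact h2.right this)
  · simpa using this

end LaurentBasics


section LocalY

open LaurentPolynomial Matrix

variable {n : ℕ} {A : Type*} [CommRing A]

theorem Dl_cancel_left (i : Fin n) (M N : Matrix (Fin n) (Fin n) (Polynomial A)) (h : Dl i * M = Dl i * N) :
    M = N := by
  apply Matrix.transpose_injective
  apply Dl_cancel i
  have := congrArg Matrix.transpose h
  rw [Matrix.transpose_mul, Matrix.transpose_mul] at this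
  simpa [Dl] using this

theorem Dl_mapRing {B : Type*} [CommRing B] (φ : A →+* B) (i : Fin n) :
    (Dl i : Matrix (Fin n) (Fin n) (Polynomial A)).map (Polynomial.mapRingHom φ) = Dl i := by
  rw [Dl, Dl, Matrix.diagonal_map (map_zero _)]
  congr; ext1 k
  split_ifs <;> simp

theorem rowlem (s : GL (Fin n) A) (hs : s ∈ elemGL n A) (i k : Fin n) (l l' : A) (hl : l * l' = 1)
    (h : ∀ a, s.val a k = if a = i then l else 0) :
    ∃ s' ∈ elemGL n (Polynomial A), s'.val * Dl k = Dl i * (glMap Polynomial.C s).val := by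
  let w : Fin n → Polynomial A := fun b => if b = k then 0 else
    (Polynomial.X - 1) * Polynomial.C (l' * s.val i b)
  obtain ⟨r, hr, hre⟩ := isE_row k w (by simp [w])
  refine ⟨glMap Polynomial.C s * r, mul_mem (glMap_mem _ hs) hr, ?_⟩
  have hl' : Polynomial.C l * Polynomial.C l' = 1 := by rw [← map_mul, hl, map_one]
  rw [Units.val_mul, hre, coe_glMap, mul_add, mul_one, Matrix.mul_vecMulVec]
  ext1 a b
  rw [Dl, Dl, Matrix.mul_diagonal, Matrix.diagonal_mul, Matrix.add_apply, Matrix.vecMulVec_apply,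
    Matrix.mulVec_single_one]
  simp only [Matrix.map_apply, Matrix.col_apply, w]
  by_cases hb : b = k
  · subst hb
    simp only [h]
    by_cases ha : a = i
    · simp only [if_pos ha, if_true]; ring
    · simp [ha]
  · simp only [h, hb, if_false]
    by_cases ha : a = i
    · subst ha
      simp only [if_true, map_mul]
      linear_combination ((Polynomial.X - 1) * Polynomial.C (s.val a b)) * hl'
    · simp [ha]

theorem collem (u : GL (Fin n) A) (i : Fin n) (c : Fin n → A) (hc : c i = 0)
    (h : u.val = 1 + Matrix.vecMulVec c (Pi.single i 1)) :
    ∃ u' ∈ elemGL n (Polynomial A), Dl i * u'.val = (glMap Polynomial.C u).val * Dl i := by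
  obtain ⟨r, hr, hre⟩ := isE_col i (fun a => Polynomial.X * Polynomial.C (c a)) (by simp [hc])
  refine ⟨r, hr, ?_⟩
  rw [hre, coe_glMap, h]
  ext1 a b
  rw [Dl, Matrix.mul_diagonal, Matrix.diagonal_mul, Matrix.map_apply, Matrix.add_apply, Matrix.add_apply,
    Matrix.vecMulVec_apply, Matrix.vecMulVec_apply]
  by_cases hb : b = i
  · subst hb
    by_cases ha : a = b
    · subst ha; simp [hc]
    · simp [ha, Matrix.one_apply]
  · by_cases ha : a = i
    · subst ha; simp [hb, Matrix.one_apply, Ne.symm hb]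
    · by_cases hab : a = b
      · simp [ha, hb, hab, Matrix.one_apply]
      · simp [ha, hb, hab, Matrix.one_apply]

variable [IsLocalRing A]

/-- elementary matrices over `A[X]` which are trivial modulo the maximal ideal. -/
noncomputable def KK (n : ℕ) (A : Type*) [CommRing A] [IsLocalRing A] : Subgroup (GL (Fin n) (Polynomial A)) :=
  elemGL n (Polynomial A) ⊓ (glMap (Polynomial.mapRingHom (IsLocalRing.residue A))).ker

theorem KK_shift {p q : GL (Fin n) (Polynomial A)} (hp : p ∈ KK n A) (hq : q ∈ elemGL n (Polynomial A))
    {i : Fin n} (h : q.val * Dl i = Dl i * p.val) : q ∈ KK n A := by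
  refine ⟨hq, ?_⟩
  have h2 : glMap (Polynomial.mapRingHom (IsLocalRing.residue A)) p = 1 := hp.2
  change glMap (Polynomial.mapRingHom (IsLocalRing.residue A)) q = 1
  apply Units.ext
  apply Dl_cancel i
  have := congrArg (fun M => Matrix.map M (Polynomial.mapRingHom (IsLocalRing.residue A))) h
  simp only [Matrix.map_mul, Dl_mapRing, ← coe_glMap, h2] at this
  simpa using this

theorem KK_shift' {p q : GL (Fin n) (Polynomial A)} (hp : p ∈ KK n A) (hq : q ∈ elemGL n (Polynomial A))
    {i : Fin n} (h : Dl i * q.val = p.val * Dl i) : q ∈ KK n A := by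
  refine ⟨hq, ?_⟩
  have h2 : glMap (Polynomial.mapRingHom (IsLocalRing.residue A)) p = 1 := hp.2
  change glMap (Polynomial.mapRingHom (IsLocalRing.residue A)) q = 1
  apply Units.ext
  apply Dl_cancel_left i
  have := congrArg (fun M => Matrix.map M (Polynomial.mapRingHom (IsLocalRing.residue A))) h
  simp only [Matrix.map_mul, Dl_mapRing, ← coe_glMap, h2] at this
  simpa using this

theorem KK_C {c : GL (Fin n) A} (hc : c ∈ elemGL n A) (h : glMap (IsLocalRing.residue A) c = 1) :
    glMap Polynomial.C c ∈ KK n A := by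
  refine ⟨glMap_mem _ hc, ?_⟩
  change glMap (Polynomial.mapRingHom (IsLocalRing.residue A)) _ = 1
  rw [gg (map_comp_C _), ← gg rfl, h, map_one]

theorem KK_ev {c : GL (Fin n) (Polynomial A)} (hc : c ∈ KK n A) :
    glMap (IsLocalRing.residue A) (glMap (Polynomial.evalRingHom 0) c) = 1 := by
  have h2 : glMap (Polynomial.mapRingHom (IsLocalRing.residue A)) c = 1 := hc.2
  have : (IsLocalRing.residue A).comp (Polynomial.evalRingHom 0) =
    (Polynomial.evalRingHom 0).comp (Polynomial.mapRingHom (IsLocalRing.residue A)) := by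
    ext <;> simp
  rw [gg this, ← gg rfl, h2, map_one]

/-- products of positive and negative congruence elements. -/
def YY (y : GL (Fin n) (Lr A)) : Prop := ∃ a ∈ KK n A, ∃ b ∈ KK n A, y = glMap (ip A) a * glMap (im A) b

theorem YY_C {y : GL (Fin n) (Lr A)} (hy : YY y) {e : GL (Fin n) A} (he : e ∈ elemGL n A) :
    YY (glMap (cL A) e * y * (glMap (cL A) e)⁻¹) := by
  obtain ⟨a, ha, b, hb, rfl⟩ := hy
  have key : ∀ a ∈ KK n A, glMap Polynomial.C e * a * (glMap Polynomial.C e)⁻¹ ∈ KK n A := by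
    intro a ha
    refine ⟨(elemGL n _).mul_mem ((elemGL n _).mul_mem (glMap_mem _ he) ha.1) ((elemGL n _).inv_mem (glMap_mem _ he)), ?_⟩
    exact (MonoidHom.normal_ker _).conj_mem _ ha.2 _
  refine ⟨_, key a ha, _, key b hb, ?_⟩
  simp only [map_mul, map_inv, gg ip_C, gg im_C]
  group

theorem YY_mid (i : Fin n) {c : GL (Fin n) A} (hc : c ∈ elemGL n A) (h : glMap (IsLocalRing.residue A) c = 1) :
    YY (DD (Pi.single i 1) * glMap (cL A) c * (DD (Pi.single i 1))⁻¹) := by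
  have hres : ∀ a b, IsLocalRing.residue A (c⁻¹.val a b) = if a = b then 1 else 0 := by
    intro a b
    have h1 : glMap (IsLocalRing.residue A) c⁻¹ = 1 := by rw [map_inv, h, inv_one]
    have := congrArg (fun z : GL (Fin n) (IsLocalRing.ResidueField A) => z.val a b) h1
    simpa only [coe_glMap, Matrix.one_apply, Matrix.map_apply, Units.val_one] using this
  have hu : IsUnit (c⁻¹.val i i) := by
    rw [← IsLocalRing.residue_ne_zero_iff_isUnit, hres]; simp
  obtain ⟨t, ht⟩ := hu.exists_right_inv
  let v : Fin n → A := fun j => if j = i then 0 else c⁻¹.val j i * t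
  obtain ⟨u, hu, hue⟩ := isE_col i v (by simp [v])
  -- s = c * u, c = s * u⁻¹
  have hures : glMap (IsLocalRing.residue A) u = 1 := by
    apply Units.ext
    rw [coe_glMap, hue]
    ext1 a b
    rw [Matrix.map_apply, Matrix.add_apply, Matrix.vecMulVec_apply, map_add, map_mul]
    by_cases ha : a = i
    · simp [v, ha, Matrix.one_apply, apply_ite]
    · have : IsLocalRing.residue A (v a) = 0 := by
        simp only [v, ha, if_false, map_mul, hres]; simp
      simp [this, Matrix.one_apply, apply_ite]
  have hinv : u⁻¹.val = 1 + Matrix.vecMulVec (-v) (Pi.single i 1) := by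
    rw [← Units.mul_right_inj u, Units.mul_inv, hue]
    have : v i = 0 := by simp [v]
    rw [add_mul, one_mul, mul_add, mul_one, Matrix.vecMulVec_mul_vecMulVec]
    simp [this, Matrix.neg_vecMulVec]
  obtain ⟨u', hu', hue'⟩ := collem u⁻¹ i (-v) (by simp [v]) hinv
  have hucol : ∀ b, u.val b i = c⁻¹.val b i * t := by
    intro b
    rw [hue, Matrix.add_apply, Matrix.vecMulVec_apply, Matrix.one_apply]
    by_cases hb : b = i
    · rw [hb, ht]; simp [v]
    · simp [v, hb]
  obtain ⟨s', hs', hse'⟩ := rowlem (c * u) (mul_mem hc hu) i i t (c⁻¹.val i i) (by rw [mul_comm, ht]) (by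
    intro a
    rw [Units.val_mul, Matrix.mul_apply]
    simp only [hucol, ← mul_assoc]
    rw [← Finset.sum_mul, ← Matrix.mul_apply, ← Units.val_mul, mul_inv_cancel, Units.val_one, Matrix.one_apply]
    simp)
  have hcu : glMap (IsLocalRing.residue A) (c * u) = 1 := by rw [map_mul, h, hures, one_mul]
  have hui : glMap (IsLocalRing.residue A) u⁻¹ = 1 := by rw [map_inv, hures, inv_one]
  refine ⟨s', KK_shift (KK_C (mul_mem hc hu) hcu) hs' hse', u', KK_shift' (KK_C (inv_mem hu) hui) hu' hue', ?_⟩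
  have e1 := toL hse'
  have e2 := congrArg (glMap (iv A)) (toL' hue')
  rw [map_mul, map_mul, DD_iv, gg iv_ip, gg iv_ip, DD_neg, gg im_C] at e2
  rw [gg ip_C] at e1
  rw [eq_mul_inv_of_mul_eq e1, eq_inv_mul_of_mul_eq e2]
  simp only [map_mul, map_inv]
  group

theorem YY_D (hn : 3 ≤ n) (i : Fin n) {y : GL (Fin n) (Lr A)} (hy : YY y) :
    YY (DD (Pi.single i 1) * y * (DD (Pi.single i 1))⁻¹) := by
  obtain ⟨a, ha, b, hb, rfl⟩ := hy
  have hea := KK_ev ha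
  have heb := KK_ev hb
  have ha0 : glMap (Polynomial.evalRingHom 0) a ∈ elemGL n A := glMap_mem _ ha.1
  have hb0 : glMap (Polynomial.evalRingHom 0) b ∈ elemGL n A := glMap_mem _ hb.1
  set a0 := glMap (Polynomial.evalRingHom 0) a with ha0d
  set b0 := glMap (Polynomial.evalRingHom 0) b with hb0d
  have hp : a * (glMap Polynomial.C a0)⁻¹ ∈ KK n A := mul_mem ha (inv_mem (KK_C ha0 hea))
  have hp' : (glMap Polynomial.C b0)⁻¹ * b ∈ KK n A := mul_mem (inv_mem (KK_C hb0 heb)) hb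
  obtain ⟨q, hq, hqe⟩ := shift hn i hp.1 (by
    rw [map_mul, map_inv, gg (ev_C _), glMap_id, ← ha0d, mul_inv_cancel])
  obtain ⟨q', hq', hqe'⟩ := shift' hn i hp'.1 (by
    rw [map_mul, map_inv, gg (ev_C _), glMap_id, ← hb0d, inv_mul_cancel])
  obtain ⟨s, hs, t, ht, hm⟩ := YY_mid i (mul_mem ha0 hb0) (by rw [map_mul, hea, heb, one_mul])
  refine ⟨q * s, mul_mem (KK_shift hp hq hqe) hs, t * q', mul_mem ht (KK_shift' hp' hq' hqe'), ?_⟩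
  have e1 := toL hqe
  have e2 := congrArg (glMap (iv A)) (toL' hqe')
  rw [map_mul, map_mul, DD_iv, gg iv_ip, gg iv_ip, DD_neg] at e2
  have e3 : glMap (ip A) (q * s) * glMap (im A) (t * q') =
      glMap (ip A) q * (glMap (ip A) s * glMap (im A) t) * glMap (im A) q' := by
    rw [map_mul, map_mul]; group
  rw [e3, ← hm, eq_mul_inv_of_mul_eq e1, eq_inv_mul_of_mul_eq e2]
  simp only [map_mul, map_inv, gg ip_C, gg im_C]
  group

theorem YY_iv {y : GL (Fin n) (Lr A)} (hy : YY y) : YY (glMap (iv A) y⁻¹) := by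
  obtain ⟨a, ha, b, hb, rfl⟩ := hy
  refine ⟨b⁻¹, inv_mem hb, a⁻¹, inv_mem ha, ?_⟩
  rw [_root_.mul_inv_rev, map_mul, map_inv, map_inv, gg iv_ip, gg iv_im, map_inv, map_inv]

theorem YY_D' (hn : 3 ≤ n) (i : Fin n) {y : GL (Fin n) (Lr A)} (hy : YY y) :
    YY ((DD (Pi.single i 1))⁻¹ * y * DD (Pi.single i 1)) := by
  have := YY_iv (YY_D hn i (YY_iv hy))
  simp only [map_mul, map_inv, DD_iv, DD_neg, gg iv_iv, glMap_id, _root_.mul_inv_rev, inv_inv] at this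
  simpa [mul_assoc] using this

end LocalY


section LocalZ

theorem conj_closure {G : Type*} [Group G] (S : Set G) (γ : G) (h : ∀ s ∈ S, γ * s * γ⁻¹ ∈ S)
    {x : G} (hx : x ∈ Subgroup.closure S) : γ * x * γ⁻¹ ∈ Subgroup.closure S := by
  have : Subgroup.closure S ≤ (Subgroup.closure S).comap (MulAut.conj γ).toMonoidHom := by
    refine (Subgroup.closure_le _).mpr ?_
    intro s hs
    exact Subgroup.subset_closure (h s hs)
  exact this hx

theorem conj_assoc {G : Type*} [Group G] (a b c : G) :
    a * (b * c * b⁻¹) * a⁻¹ = (a * b) * c * (a * b)⁻¹ := by group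

/-- conjugate preimage of a subgroup -/
def conjSub {G K : Type*} [Group G] [Group K] (B : Subgroup G) (φ : K →* G) (d : G) : Subgroup K where
  carrier := {x | d⁻¹ * φ x * d ∈ B}
  one_mem' := by simp
  mul_mem' := by
    intro a b ha hb
    have := B.mul_mem ha hb
    simpa [mul_assoc] using this
  inv_mem' := by
    intro a ha
    have := B.inv_mem ha
    simpa [mul_assoc] using this

open LaurentPolynomial Matrix

variable {n : ℕ} {A : Type*} [CommRing A]

/-- the group generated by constant elementary matrices and diagonal ones. -/
noncomputable def Gam (n : ℕ) (A : Type*) [CommRing A] : Subgroup (GL (Fin n) (Lr A)) :=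
  Subgroup.closure ({g | ∃ e ∈ elemGL n A, g = glMap (cL A) e} ∪ {g | ∃ i, g = DD (Pi.single i 1)})

theorem Gam_C {e : GL (Fin n) A} (he : e ∈ elemGL n A) : glMap (cL A) e ∈ Gam n A :=
  Subgroup.subset_closure (Or.inl ⟨e, he, rfl⟩)

theorem Gam_D (d : Fin n → ℤ) : DD d ∈ Gam n A :=
  DD_mem _ (fun i => Subgroup.subset_closure (Or.inr ⟨i, rfl⟩)) d

theorem Gam_tv (i j : Fin n) (h : i ≠ j) (c : Lr A) : tv i j h c ∈ Gam n A := by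
  induction c using LaurentPolynomial.induction_on' with
  | add p q hp hq => rw [tv_add]; exact mul_mem hp hq
  | C_mul_T k a =>
    have h1 := DD_tv (Pi.single i k) i j h (LaurentPolynomial.C a)
    have h2 : tv i j h (LaurentPolynomial.C a * T k) =
        DD (Pi.single i k) * glMap (cL A) (tv i j h a) * (DD (Pi.single i k))⁻¹ := by
      rw [glMap_tv, eq_mul_inv_iff_mul_eq]
      have : (Pi.single i k : Fin n → ℤ) i - (Pi.single i k : Fin n → ℤ) j = k := by
        simp [Ne.symm h]
      rw [this, mul_comm] at h1
      exact h1.symm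
    rw [h2]
    exact mul_mem (mul_mem (Gam_D _) (Gam_C (tv_mem _ _ _ _))) (inv_mem (Gam_D _))

theorem Gam_E {g : GL (Fin n) (Lr A)} (hg : g ∈ elemGL n (Lr A)) : g ∈ Gam n A :=
  elem_induct (P := fun g => g ∈ Gam n A) (one_mem _)
    (fun i j h c _ _ ih => mul_mem (Gam_tv i j h c) ih) hg

/-- induction for Gam : closure under left multiplication -/
theorem Gam_le (H : Subgroup (GL (Fin n) (Lr A))) (h1 : ∀ e ∈ elemGL n A, glMap (cL A) e ∈ H)
    (h2 : ∀ i, DD (Pi.single i 1) ∈ H) : Gam n A ≤ H := by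
  refine (Subgroup.closure_le _).mpr ?_
  rintro _ (⟨e, he, rfl⟩ | ⟨i, rfl⟩)
  · exact h1 e he
  · exact h2 i

variable [IsLocalRing A]

theorem YY_Gam (hn : 3 ≤ n) {γ : GL (Fin n) (Lr A)} (hγ : γ ∈ Gam n A) :
    ∀ y, YY y → YY (γ * y * γ⁻¹) := by
  let H : Subgroup (GL (Fin n) (Lr A)) :=
    { carrier := {γ | (∀ y, YY y → YY (γ * y * γ⁻¹)) ∧ (∀ y, YY y → YY (γ⁻¹ * y * γ))}
      one_mem' := by constructor <;> intro y hy <;> simpa using hy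
      mul_mem' := by
        rintro a b ⟨ha, ha'⟩ ⟨hb, hb'⟩
        constructor
        · intro y hy
          have := ha _ (hb _ hy)
          convert this using 1; group
        · intro y hy
          have := hb' _ (ha' _ hy)
          convert this using 1; group
      inv_mem' := by
        rintro a ⟨ha, ha'⟩
        constructor
        · intro y hy
          simpa using ha' y hy
        · intro y hy
          simpa using ha y hy }
  have : Gam n A ≤ H := by
    apply Gam_le
    · intro e he
      constructor
      · intro y hy
        exact YY_C hy he
      · intro y hy
        have := YY_C hy (inv_mem he)
        simpa using this
    · intro i
      exact ⟨fun y hy => YY_D hn i hy, fun y hy => YY_D' hn i hy⟩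
  exact (this hγ).1

/-- congruence subgroup generators -/
noncomputable def Ngen (n : ℕ) (A : Type*) [CommRing A] [IsLocalRing A] : Set (GL (Fin n) (Lr A)) :=
  {g | ∃ γ ∈ Gam n A, ∃ (i j : Fin n) (h : i ≠ j) (c : A), c ∈ IsLocalRing.maximalIdeal A ∧
      g = γ * glMap (cL A) (tv i j h c) * γ⁻¹}

/-- the congruence subgroup -/
noncomputable def NN (n : ℕ) (A : Type*) [CommRing A] [IsLocalRing A] : Subgroup (GL (Fin n) (Lr A)) :=
  Subgroup.closure (Ngen n A)

theorem NN_conj {γ x : GL (Fin n) (Lr A)} (hγ : γ ∈ Gam n A) (hx : x ∈ NN n A) : γ * x * γ⁻¹ ∈ NN n A := by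
  refine conj_closure (Ngen n A) γ ?_ hx
  rintro _ ⟨γ', hγ', i, j, h, c, hc, rfl⟩
  exact ⟨γ * γ', mul_mem hγ hγ', i, j, h, c, hc, conj_assoc _ _ _⟩

theorem NN_YY (hn : 3 ≤ n) {x : GL (Fin n) (Lr A)} (hx : x ∈ NN n A) : YY x := by
  have key : ∀ x ∈ Ngen n A, ∀ y, YY y → YY (x * y) := by
    rintro _ ⟨γ, hγ, i, j, h, c, hc, rfl⟩ y hy
    have h1 := YY_Gam hn (inv_mem hγ) y hy
    obtain ⟨a, ha, b, hb, hab⟩ := h1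
    have h2 : YY (glMap (cL A) (tv i j h c) * (γ⁻¹ * y * γ⁻¹⁻¹)) := by
      refine ⟨glMap Polynomial.C (tv i j h c) * a, mul_mem (KK_C (tv_mem _ _ _ _) ?_) ha, b, hb, ?_⟩
      · rw [glMap_tv, (IsLocalRing.residue_eq_zero_iff c).mpr hc, tv_zero]
      · rw [hab, map_mul, gg ip_C, mul_assoc]
    have := YY_Gam hn hγ _ h2
    convert this using 1
    group
  unfold NN at hx
  induction hx using Subgroup.closure_induction_left with
  | one => exact ⟨1, one_mem _, 1, one_mem _, by simp⟩
  | mul_left x hx y hy ih => exact key x hx y ih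
  | inv_mul_cancel x hx y hy ih =>
    refine key _ ?_ y ih
    obtain ⟨γ, hγ, i, j, h, c, hc, rfl⟩ := hx
    refine ⟨γ, hγ, i, j, h, -c, neg_mem hc, ?_⟩
    rw [← tv_inv, map_inv]
    group

theorem im_Gam {b : GL (Fin n) (Polynomial A)} (hb : b ∈ elemGL n (Polynomial A)) : glMap (im A) b ∈ Gam n A :=
  Gam_E (glMap_mem _ hb)

/-- the subgroup `im E * N` -/
noncomputable def BB (n : ℕ) (A : Type*) [CommRing A] [IsLocalRing A] : Subgroup (GL (Fin n) (Lr A)) where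
  carrier := {x | ∃ b ∈ elemGL n (Polynomial A), ∃ κ ∈ NN n A, x = glMap (im A) b * κ}
  one_mem' := ⟨1, one_mem _, 1, one_mem _, by simp⟩
  mul_mem' := by
    rintro _ _ ⟨b, hb, κ, hκ, rfl⟩ ⟨b', hb', κ', hκ', rfl⟩
    refine ⟨b * b', mul_mem hb hb', _, mul_mem (NN_conj (inv_mem (im_Gam hb')) hκ) hκ', ?_⟩
    rw [map_mul]; group
  inv_mem' := by
    rintro _ ⟨b, hb, κ, hκ, rfl⟩
    refine ⟨b⁻¹, inv_mem hb, _, NN_conj (im_Gam hb) (inv_mem hκ), ?_⟩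
    rw [map_inv]; group

/-- the big cell decomposition -/
def ZZ (z : GL (Fin n) (Lr A)) : Prop := ∃ a ∈ elemGL n (Polynomial A), ∃ d : Fin n → ℤ, ∃ x ∈ BB n A,
  z = glMap (ip A) a * DD d * x

theorem ZZ_C {z : GL (Fin n) (Lr A)} (hz : ZZ z) {e : GL (Fin n) A} (he : e ∈ elemGL n A) :
    ZZ (glMap (cL A) e * z) := by
  obtain ⟨a, ha, d, x, hx, rfl⟩ := hz
  refine ⟨glMap Polynomial.C e * a, mul_mem (glMap_mem _ he) ha, d, x, hx, ?_⟩
  rw [map_mul, gg ip_C]; group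

theorem ZZ_const {z : GL (Fin n) (Lr A)} (hz : ZZ z) (k : ℤ) : ZZ (DD (fun _ => k) * z) := by
  obtain ⟨a, ha, d, x, hx, rfl⟩ := hz
  refine ⟨a, ha, (fun _ => k) + d, x, hx, ?_⟩
  rw [DD_add, ← mul_assoc, ← mul_assoc, ← mul_assoc, DD_const]

theorem ZZ_D (hn : 3 ≤ n) (i : Fin n) {z : GL (Fin n) (Lr A)} (hz : ZZ z) :
    ZZ (DD (Pi.single i 1) * z) := by
  classical
  obtain ⟨a, ha, d, x, hx, rfl⟩ := hz
  have ha0 : glMap (Polynomial.evalRingHom 0) a ∈ elemGL n A := glMap_mem _ ha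
  set a0 := glMap (Polynomial.evalRingHom 0) a with ha0d
  have hp : a * (glMap Polynomial.C a0)⁻¹ ∈ elemGL n (Polynomial A) := mul_mem ha (inv_mem (glMap_mem _ ha0))
  obtain ⟨q, hq, hqe⟩ := shift hn i hp (by
    rw [map_mul, map_inv, gg (ev_C _), glMap_id, ← ha0d, mul_inv_cancel])
  -- choose k
  have hex : ∃ k ∈ Finset.univ.filter (fun k => IsUnit (a0⁻¹.val k i)),
      ∀ j ∈ Finset.univ.filter (fun k => IsUnit (a0⁻¹.val k i)), d k ≤ d j := by
    apply Finset.exists_min_image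
    by_contra hne
    rw [Finset.not_nonempty_iff_eq_empty, Finset.filter_eq_empty_iff] at hne
    have h1 : (1 : A) ∈ IsLocalRing.maximalIdeal A := by
      have : (a0 * a0⁻¹).val i i = 1 := by rw [mul_inv_cancel]; simp
      rw [← this, Units.val_mul, Matrix.mul_apply]
      refine sum_mem fun k _ => Ideal.mul_mem_left _ _ ?_
      exact (IsLocalRing.mem_maximalIdeal _).mpr (hne (Finset.mem_univ k))
    exact (Ideal.ne_top_iff_one _).mp (IsLocalRing.maximalIdeal.isMaximal A).ne_top h1
  obtain ⟨k, hk, hmin⟩ := hex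
  simp only [Finset.mem_filter, Finset.mem_univ, true_and] at hk hmin
  obtain ⟨t, ht⟩ := hk.exists_right_inv
  let v : Fin n → A := fun j => if j = k then 0 else a0⁻¹.val j i * t
  have hvk : v k = 0 := by simp [v]
  -- the subgroup
  let H : Subgroup (GL (Fin n) A) := conjSub (BB n A) (glMap (cL A)) (DD d)
  obtain ⟨u, ⟨hu, huH⟩, hue⟩ := col_mem (elemGL n A ⊓ H) k v hvk (by
    intro j hj
    refine ⟨tv_mem _ _ _ _, ?_⟩
    change (DD d)⁻¹ * (glMap (cL A) (tv j k hj (v j))) * DD d ∈ BB n A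
    by_cases hm : v j ∈ IsLocalRing.maximalIdeal A
    · refine ⟨1, one_mem _, _, Subgroup.subset_closure ⟨(DD d)⁻¹, inv_mem (Gam_D d), j, k, hj, v j, hm, rfl⟩, ?_⟩
      rw [map_one, one_mul, inv_inv]
    · have hun : IsUnit (v j) := by
        by_contra h; exact hm ((IsLocalRing.mem_maximalIdeal _).mpr h)
      have hun' : IsUnit (a0⁻¹.val j i) := by
        simp only [v, hj, if_false] at hun
        exact isUnit_of_mul_isUnit_left hun
      have hd := hmin j hun'
      refine ⟨tv j k hj (Polynomial.C (v j) * Polynomial.X ^ (d j - d k).toNat), tv_mem _ _ _ _, 1, one_mem _, ?_⟩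
      have hT : im A (Polynomial.C (v j) * Polynomial.X ^ (d j - d k).toNat) =
          T ((-d) j - (-d) k) * cL A (v j) := by
        rw [map_mul, map_pow, im_X, ← im_C, T_pow, RingHom.comp_apply, mul_comm]
        congr 2
        simp only [Pi.neg_apply]
        rw [Int.toNat_of_nonneg (by omega)]
        ring
      rw [glMap_tv, glMap_tv, ← DD_neg, DD_tv, DD_neg, hT]
      simp)
  have hucol : ∀ b, u.val b k = a0⁻¹.val b i * t := by
    intro b
    rw [hue, Matrix.add_apply, Matrix.vecMulVec_apply, Matrix.one_apply]
    by_cases hb : b = k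
    · rw [hb, ht]; simp [v]
    · simp [v, hb]
  obtain ⟨s', hs', hse'⟩ := rowlem (a0 * u) (mul_mem ha0 hu) i k t (a0⁻¹.val k i) (by rw [mul_comm, ht]) (by
    intro a
    rw [Units.val_mul, Matrix.mul_apply]
    simp only [hucol, ← mul_assoc]
    rw [← Finset.sum_mul, ← Matrix.mul_apply, ← Units.val_mul, mul_inv_cancel, Units.val_one, Matrix.one_apply]
    simp)
  have huH' : (DD d)⁻¹ * glMap (cL A) u * DD d ∈ BB n A := huH
  refine ⟨q * s', mul_mem hq hs', Pi.single k 1 + d, _, mul_mem (inv_mem huH') hx, ?_⟩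
  have e1 := toL hqe
  have e2 := toL hse'
  rw [gg ip_C] at e2
  rw [map_mul, eq_mul_inv_of_mul_eq e1, eq_mul_inv_of_mul_eq e2, DD_add]
  simp only [map_mul, map_inv, gg ip_C]
  group

theorem ZZ_Gam (hn : 3 ≤ n) {γ : GL (Fin n) (Lr A)} (hγ : γ ∈ Gam n A) : ZZ γ := by
  let H : Subgroup (GL (Fin n) (Lr A)) :=
    { carrier := {γ | (∀ y, ZZ y → ZZ (γ * y)) ∧ (∀ y, ZZ y → ZZ (γ⁻¹ * y))}
      one_mem' := by constructor <;> intro y hy <;> simpa using hy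
      mul_mem' := by
        rintro a b ⟨ha, ha'⟩ ⟨hb, hb'⟩
        constructor
        · intro y hy
          rw [mul_assoc]
          exact ha _ (hb _ hy)
        · intro y hy
          rw [_root_.mul_inv_rev, mul_assoc]
          exact hb' _ (ha' _ hy)
      inv_mem' := by
        rintro a ⟨ha, ha'⟩
        constructor
        · intro y hy
          simpa using ha' y hy
        · intro y hy
          simpa using ha y hy }
  have : Gam n A ≤ H := by
    apply Gam_le
    · intro e he
      constructor
      · intro y hy
        exact ZZ_C hy he
      · intro y hy
        have := ZZ_C hy (inv_mem he)
        simpa using this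
    · intro i
      refine ⟨fun y hy => ZZ_D hn i hy, ?_⟩
      have key : ∀ s : Finset (Fin n), ∀ y : GL (Fin n) (Lr A), ZZ y → ZZ (DD (∑ j ∈ s, Pi.single j 1) * y) := by
        intro s
        induction s using Finset.induction_on with
        | empty => intro y hy; simpa [DD_zero] using hy
        | insert j s hj ih =>
          intro y hy
          rw [Finset.sum_insert hj, DD_add, mul_assoc]
          exact ZZ_D hn j (ih y hy)
      intro y hy
      have h1 := ZZ_const (key (Finset.univ.erase i) y hy) (-1)
      have h2 : -(Pi.single i 1 : Fin n → ℤ) = (fun _ => -1) + ∑ j ∈ Finset.univ.erase i, Pi.single j 1 := by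
        have h3 := Finset.add_sum_erase Finset.univ (fun j => (Pi.single j 1 : Fin n → ℤ)) (Finset.mem_univ i)
        have h4 : ∑ j, (Pi.single j 1 : Fin n → ℤ) = fun _ => 1 := by
          ext k; simp [Finset.sum_apply]
        rw [h4] at h3
        ext k
        have h5 := congrFun h3 k
        simp only [Pi.add_apply, Pi.neg_apply] at h5 ⊢
        linarith
      rw [← DD_neg, h2, DD_add, mul_assoc]
      exact h1
  have h1 : ZZ (1 : GL (Fin n) (Lr A)) := ⟨1, one_mem _, 0, 1, one_mem _, by simp [DD_zero]⟩
  simpa using (this hγ).1 1 h1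

end LocalZ


section LocalThm

open LaurentPolynomial Matrix

variable {n : ℕ} {A : Type*} [CommRing A]

theorem d_zero [Nontrivial A] (d : Fin n → ℤ) (P Q : GL (Fin n) (Polynomial A))
    (h : (DD d : GL (Fin n) (Lr A)) = glMap (ip A) P * glMap (im A) Q) : d = 0 := by
  have key1 : ∀ i, ¬ d i < 0 := by
    intro i hi
    have h1 : glMap (ip A) P = DD d * glMap (im A) Q⁻¹ := by
      rw [h, map_inv, mul_inv_cancel_right]
    have h2 : ∀ j, P.val i j = 0 := by
      intro j
      have h3 := congrArg (fun z : GL (Fin n) (Lr A) => trunc (z.val i j)) h1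
      simp only [Units.val_mul, DD_val, Matrix.diagonal_mul, coe_glMap, Matrix.map_apply] at h3
      rw [trunc_neg _ hi] at h3
      simpa [ip] using h3
    have h4 : (P * P⁻¹).val i i = 1 := by rw [mul_inv_cancel]; simp
    rw [Units.val_mul, Matrix.mul_apply] at h4
    simp [h2] at h4
  have key2 : ∀ i, ¬ 0 < d i := by
    intro i hi
    have h1 : glMap (ip A) P⁻¹ = glMap (im A) Q * DD (-d) := by
      rw [DD_neg, h, map_inv, _root_.mul_inv_rev, mul_inv_cancel_left]
    have h2 : ∀ j, P⁻¹.val j i = 0 := by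
      intro j
      have h3 := congrArg (fun z : GL (Fin n) (Lr A) => trunc (z.val j i)) h1
      simp only [Units.val_mul, DD_val, Matrix.mul_diagonal, coe_glMap, Matrix.map_apply] at h3
      rw [mul_comm, trunc_neg _ (by simpa using hi)] at h3
      simpa [ip] using h3
    have h4 : (P * P⁻¹).val i i = 1 := by rw [mul_inv_cancel]; simp
    rw [Units.val_mul, Matrix.mul_apply] at h4
    simp [h2] at h4
  ext i
  have := key1 i
  have := key2 i
  simp only [Pi.zero_apply]
  omega

variable [IsLocalRing A]

theorem YY_red {y : GL (Fin n) (Lr A)} (hy : YY y) : glMap (lm (IsLocalRing.residue A)) y = 1 := by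
  obtain ⟨a, ha, b, hb, rfl⟩ := hy
  have ha' : glMap (Polynomial.mapRingHom (IsLocalRing.residue A)) a = 1 := ha.2
  have hb' : glMap (Polynomial.mapRingHom (IsLocalRing.residue A)) b = 1 := hb.2
  rw [map_mul, gg (lm_ip _), gg (lm_im _), ← glMap_glMap, ← glMap_glMap, ha', hb']
  simp

theorem local_thm (hn : 3 ≤ n) (g h : GL (Fin n) (Polynomial A))
    (h0 : glMap (Polynomial.evalRingHom 0) h = 1)
    (hE : glMap (ip A) g * glMap (im A) h ∈ elemGL n (Lr A)) :
    g ∈ elemGL n (Polynomial A) ∧ h ∈ elemGL n (Polynomial A) := by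
  obtain ⟨a, ha, d, _, ⟨b, hb, κ, hκ, rfl⟩, he⟩ := ZZ_Gam hn (Gam_E hE)
  have hκ' := NN_conj (im_Gam hb) hκ
  have he' : glMap (ip A) g * glMap (im A) h =
      glMap (ip A) a * DD d * (glMap (im A) b * κ * (glMap (im A) b)⁻¹) * glMap (im A) b := by
    rw [he]; group
  obtain hY := NN_YY hn hκ'
  have hred := YY_red hY
  have hd : d = 0 := by
    have h1 := congrArg (glMap (lm (IsLocalRing.residue A))) he'
    rw [map_mul, map_mul, map_mul, map_mul, hred, mul_one, DD_lm, gg (lm_ip _), gg (lm_im _), gg (lm_ip _), gg (lm_im _)] at h1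
    simp only [← glMap_glMap] at h1
    refine d_zero (A := IsLocalRing.ResidueField A) d
      ((glMap (Polynomial.mapRingHom (IsLocalRing.residue A)) a)⁻¹ * glMap (Polynomial.mapRingHom (IsLocalRing.residue A)) g)
      (glMap (Polynomial.mapRingHom (IsLocalRing.residue A)) h * (glMap (Polynomial.mapRingHom (IsLocalRing.residue A)) b)⁻¹) ?_
    rw [map_mul, map_mul, map_inv, map_inv, mul_assoc, ← mul_assoc (glMap _ _) (glMap _ _) (_)⁻¹, h1]
    group
  subst hd
  obtain ⟨k1, hk1, k2, hk2, hk⟩ := hY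
  rw [hk, DD_zero, mul_one] at he'
  have h5 : glMap (ip A) ((a * k1)⁻¹ * g) = glMap (im A) (k2 * b * h⁻¹) := by
    rw [map_mul, map_inv, map_mul, map_mul, map_mul, map_inv, eq_mul_inv_iff_mul_eq, mul_assoc, he']
    group
  have hak : a * k1 ∈ elemGL n (Polynomial A) := mul_mem ha hk1.1
  have hkb : k2 * b ∈ elemGL n (Polynomial A) := mul_mem hk2.1 hb
  have h6 := ip_eq_im h5
  have h7 := im_eq_ip h5
  have h8 : (a * k1)⁻¹ * g ∈ elemGL n (Polynomial A) := by
    rw [h6, map_mul, map_inv, h0, inv_one, mul_one]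
    exact glMap_mem _ (glMap_mem _ hkb)
  have h9 : k2 * b * h⁻¹ ∈ elemGL n (Polynomial A) := by
    rw [h7]
    exact glMap_mem _ (glMap_mem _ h8)
  constructor
  · exact (Subgroup.mul_mem_cancel_left _ (inv_mem hak)).mp h8
  · exact inv_mem_iff.mp ((Subgroup.mul_mem_cancel_left _ hkb).mp h9)

end LocalThm


section GlobalThm

open LaurentPolynomial Matrix

variable {n : ℕ} {A : Type*} [CommRing A]

theorem mem_left {G : Type*} [Group G] (H : Subgroup G) {a b : G} (hb : b ∈ H) (hab : a * b ∈ H) : a ∈ H :=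
  (H.mul_mem_cancel_right hb).mp hab

theorem exists_ev1 (A : Type*) [CommRing A] : ∃ ε : Lr A →+* A, ε.comp (ip A) = Polynomial.evalRingHom 1 ∧
    ε.comp (im A) = Polynomial.evalRingHom 1 := by
  refine ⟨LaurentPolynomial.eval₂ (RingHom.id A) 1, ?_, ?_⟩
  · apply Polynomial.ringHom_ext
    · intro a; simp [ip]
    · simp [ip]
  · apply Polynomial.ringHom_ext
    · intro a; simp [im, ip, iv_C]
    · simp [im, ip, iv_T]

theorem base_thm {B : Type*} [CommRing B] [IsLocalRing B] (hn : 3 ≤ n) (φ : A →+* B)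
    (g h : GL (Fin n) (Polynomial A)) (h0 : glMap (Polynomial.evalRingHom 0) h = 1)
    (hE : glMap (ip A) g * glMap (im A) h ∈ elemGL n (Lr A)) :
    glMap (Polynomial.mapRingHom φ) g ∈ elemGL n (Polynomial B) ∧
      glMap (Polynomial.mapRingHom φ) h ∈ elemGL n (Polynomial B) := by
  apply local_thm hn
  · have e : (Polynomial.evalRingHom 0).comp (Polynomial.mapRingHom φ) =
        φ.comp (Polynomial.evalRingHom 0) := by
      apply Polynomial.ringHom_ext
      · intro a; simp
      · simp
    rw [gg e, ← glMap_glMap, h0, map_one]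
  · have := glMap_mem (lm φ) hE
    rw [map_mul, gg (lm_ip _), gg (lm_im _)] at this
    rw [glMap_glMap, glMap_glMap]
    exact this

theorem mem_of_quot (g : GL (Fin n) (Polynomial A))
    (hg : g * (glMap Polynomial.C (glMap (Polynomial.evalRingHom 0) g))⁻¹ ∈ elemGL n (Polynomial A))
    (h2 : glMap (Polynomial.evalRingHom 1) g ∈ elemGL n A) : g ∈ elemGL n (Polynomial A) := by
  have h3 := glMap_mem (Polynomial.evalRingHom 1) hg
  rw [map_mul, map_inv, gg (ev_C _), glMap_id] at h3
  have h4 : glMap (Polynomial.evalRingHom 0) g ∈ elemGL n A :=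
    inv_mem_iff.mp ((Subgroup.mul_mem_cancel_left _ h2).mp h3)
  have h5 : glMap Polynomial.C (glMap (Polynomial.evalRingHom 0) g) ∈ elemGL n (Polynomial A) := glMap_mem _ h4
  exact (Subgroup.mul_mem_cancel_right _ (inv_mem h5)).mp hg

theorem ev1_mem (g h : GL (Fin n) (Polynomial A))
    (hE : glMap (ip A) g * glMap (im A) h ∈ elemGL n (Lr A)) :
    glMap (Polynomial.evalRingHom 1) g * glMap (Polynomial.evalRingHom 1) h ∈ elemGL n A := by
  obtain ⟨ε, e1, e2⟩ := exists_ev1 A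
  have h1 := glMap_mem ε hE
  rw [map_mul, gg e1, gg e2] at h1
  exact h1


theorem loc1 (hn : 3 ≤ n) (g h : GL (Fin n) (Polynomial A))
    (h0 : glMap (Polynomial.evalRingHom 0) h = 1)
    (hE : glMap (ip A) g * glMap (im A) h ∈ elemGL n (Lr A)) (m : Ideal A) [m.IsMaximal] :
      glMap (Polynomial.mapRingHom (algebraMap A (Localization.AtPrime m))) g ∈
        elemGL n (Polynomial (Localization.AtPrime m)) ∧
      glMap (Polynomial.mapRingHom (algebraMap A (Localization.AtPrime m))) h ∈
        elemGL n (Polynomial (Localization.AtPrime m)) :=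
  base_thm hn (algebraMap A (Localization.AtPrime m)) g h h0 hE

theorem loc2 (hn : 3 ≤ n) (g h : GL (Fin n) (Polynomial A))
    (h0 : glMap (Polynomial.evalRingHom 0) h = 1)
    (hE : glMap (ip A) g * glMap (im A) h ∈ elemGL n (Lr A)) :
    g * (glMap Polynomial.C (glMap (Polynomial.evalRingHom 0) g))⁻¹ ∈ elemGL n (Polynomial A) :=
  local_global hn g (fun m hm => (loc1 hn g h h0 hE m).1)

theorem loc3 (hn : 3 ≤ n) (g h : GL (Fin n) (Polynomial A))
    (h0 : glMap (Polynomial.evalRingHom 0) h = 1)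
    (hE : glMap (ip A) g * glMap (im A) h ∈ elemGL n (Lr A)) :
    h ∈ elemGL n (Polynomial A) := by
  have hh := local_global hn h (fun m hm => (loc1 hn g h h0 hE m).2)
  rw [h0, map_one, inv_one, mul_one] at hh
  exact hh

theorem global_thm (hn : 3 ≤ n) (g h : GL (Fin n) (Polynomial A))
    (h0 : glMap (Polynomial.evalRingHom 0) h = 1)
    (hE : glMap (ip A) g * glMap (im A) h ∈ elemGL n (Lr A)) :
    g ∈ elemGL n (Polynomial A) := by
  have h1 := glMap_mem (Polynomial.evalRingHom 1) (loc3 hn g h h0 hE)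
  have h2 := mem_left _ h1 (ev1_mem g h hE)
  exact mem_of_quot g (loc2 hn g h h0 hE) h2

end GlobalThm


section Final

open LaurentPolynomial Matrix

variable {n : ℕ} {A : Type*} [CommRing A]

theorem im_inj : Function.Injective (im A) := by
  intro x y h
  have h1 := congrArg (iv A) h
  rw [← RingHom.comp_apply, ← RingHom.comp_apply, iv_im] at h1
  exact ip_inj h1

theorem im_exists (u : Lr A) : ∃ (m : ℕ) (q : Polynomial A), im A q = im A (Polynomial.X ^ m) * u := by
  obtain ⟨m, q, h⟩ := LaurentPolynomial.exists_T_pow (iv A u)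
  refine ⟨m, q, ?_⟩
  have h1 := congrArg (iv A) h
  rw [map_mul, iv_T, ← RingHom.comp_apply (iv A) (iv A), iv_iv, RingHom.id_apply] at h1
  rw [map_pow, im_X, T_pow]
  simp only [mul_neg, mul_one]
  rw [mul_comm, ← h1]
  rfl

theorem im_X_unit (m : ℕ) : IsUnit (im A (Polynomial.X ^ m)) := by
  rw [map_pow, im_X]
  exact (LaurentPolynomial.isUnit_T _).pow _

theorem im_rev (f : Polynomial A) : im A f.reverse = ip A f * T (-(f.natDegree : ℤ)) := by
  have h := LaurentPolynomial.toLaurent_reverse f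
  have h1 := congrArg (iv A) h
  rw [map_mul, iv_T] at h1
  have h2 : iv A (iv A (ip A f)) = ip A f := by
    rw [← RingHom.comp_apply (iv A) (iv A), iv_iv, RingHom.id_apply]
  rw [← h2]
  exact h1

theorem ip_rev (f : Polynomial A) : ip A f = im A f.reverse * T (f.natDegree : ℤ) := by
  rw [im_rev, mul_assoc, ← T_add]; simp

theorem rev_cop (f : Polynomial A) (hf : f.Monic) : IsCoprime Polynomial.X f.reverse := by
  refine ⟨-f.reverse.divX, 1, ?_⟩
  have h := Polynomial.divX_mul_X_add f.reverse
  rw [Polynomial.coeff_zero_reverse, hf.leadingCoeff, Polynomial.C_1] at h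
  linear_combination -h

theorem ip_nzd (f : Polynomial A) (hf : f.Monic) : ip A f ∈ nonZeroDivisors (Lr A) := by
  rw [mem_nonZeroDivisors_iff_right]
  intro u hu
  obtain ⟨m, q, h⟩ := LaurentPolynomial.exists_T_pow u
  change ip A q = _ at h
  have h1 : ip A (q * f) = 0 := by
    rw [map_mul, h]; linear_combination T (m : ℤ) * hu
  have h2 : q * f = 0 := ip_inj (by rw [h1, map_zero])
  have h3 : q = 0 := hf.mul_left_eq_zero_iff.mp h2
  rw [h3, map_zero] at h
  exact ((LaurentPolynomial.isUnit_T (m : ℤ)).mul_left_eq_zero).mp h.symm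

/-- the abstract patching square -/
theorem entry {S R2 : Type*} [CommRing S] [CommRing R2] (φ1 : Lr A →+* S) (hφ1 : Function.Injective φ1)
    (φ2 : R2 →+* S) (F : Polynomial A) (hF : IsCoprime Polynomial.X F) [Algebra (Polynomial A) R2]
    [IsLocalization.Away F R2] (hc : φ1.comp (im A) = φ2.comp (algebraMap _ R2))
    (u : Lr A) (v : R2) (h : φ1 u = φ2 v) :
    ∃ w, im A w = u ∧ algebraMap _ R2 w = v := by
  have hc' : ∀ x, φ1 (im A x) = φ2 (algebraMap _ R2 x) := fun x => RingHom.congr_fun hc x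
  obtain ⟨m, q, hq⟩ := im_exists u
  obtain ⟨⟨p, ⟨_, k, rfl⟩⟩, hp⟩ := IsLocalization.surj (Submonoid.powers F) v
  simp only at hp
  have h1 : u * im A (F ^ k) = im A p := by
    apply hφ1
    rw [map_mul, h, hc', hc', ← map_mul, hp]
  have h2 : q * F ^ k = p * Polynomial.X ^ m := by
    apply im_inj
    rw [map_mul, map_mul, hq, ← h1]; ring
  have h3 : Polynomial.X ^ m ∣ q :=
    (hF.pow (m := m) (n := k)).dvd_of_dvd_mul_right ⟨p, by rw [h2, mul_comm]⟩
  obtain ⟨w, rfl⟩ := h3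
  refine ⟨w, ?_, ?_⟩
  · rw [map_mul] at hq
    exact (im_X_unit m).mul_left_cancel hq
  · have h4 : w * F ^ k = p := by
      apply ((Polynomial.isRegular_X (R := A)).pow m).left
      simp only
      linear_combination h2
    apply (IsLocalization.map_units R2 (⟨F ^ k, k, rfl⟩ : Submonoid.powers F)).mul_right_cancel
    simp only
    rw [hp, ← map_mul, h4]

theorem lift_GL {R1 R2 B S : Type*} [CommRing R1] [CommRing R2] [CommRing B] [CommRing S]
    (φ1 : R1 →+* S) (φ2 : R2 →+* S) (ψ1 : B →+* R1) (ψ2 : B →+* R2) (hi : Function.Injective ψ1)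
    (H : ∀ u v, φ1 u = φ2 v → ∃ w, ψ1 w = u ∧ ψ2 w = v) (M : GL (Fin n) R1) (N : GL (Fin n) R2)
    (h : glMap φ1 M = glMap φ2 N) : ∃ W : GL (Fin n) B, glMap ψ1 W = M ∧ glMap ψ2 W = N := by
  have ent : ∀ (M : GL (Fin n) R1) (N : GL (Fin n) R2), glMap φ1 M = glMap φ2 N →
      ∃ W : Matrix (Fin n) (Fin n) B, W.map ψ1 = M.val ∧ W.map ψ2 = N.val := by
    intro M N h
    have h1 : ∀ i j, ∃ w, ψ1 w = M.val i j ∧ ψ2 w = N.val i j := by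
      intro i j
      apply H
      have := congrArg (fun z : GL (Fin n) S => z.val i j) h
      simpa only [coe_glMap, Matrix.map_apply] using this
    choose W hW hW' using h1
    exact ⟨Matrix.of W, by ext i j; exact hW i j, by ext i j; exact hW' i j⟩
  obtain ⟨W, h1, h2⟩ := ent M N h
  obtain ⟨W', h1', h2'⟩ := ent M⁻¹ N⁻¹ (by rw [map_inv, map_inv, h])
  have hinj : Function.Injective (fun X : Matrix (Fin n) (Fin n) B => X.map ψ1) :=
    Matrix.map_injective hi
  refine ⟨⟨W, W', ?_, ?_⟩, ?_, ?_⟩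
  · apply hinj
    simp only [Matrix.map_mul, h1, h1']
    rw [← Units.val_mul, mul_inv_cancel]; simp
  · apply hinj
    simp only [Matrix.map_mul, h1, h1']
    rw [← Units.val_mul, inv_mul_cancel]; simp
  · apply Units.ext
    rw [coe_glMap]; exact h1
  · apply Units.ext
    rw [coe_glMap]; exact h2

theorem final_aux {S R2 : Type*} [CommRing S] [CommRing R2] (hn : 3 ≤ n) (f : Polynomial A) (hf : f.Monic)
    [Algebra (Lr A) S] [IsLocalization.Away (ip A f) S] [Algebra (Polynomial A) R2]
    [IsLocalization.Away f.reverse R2] (g : GL (Fin n) (Polynomial A))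
    (hg : glMap (algebraMap (Lr A) S) (glMap (ip A) g) ∈ elemGL n S) : g ∈ elemGL n (Polynomial A) := by
  have hfu : IsUnit (algebraMap (Lr A) S (ip A f)) := IsLocalization.Away.algebraMap_isUnit _
  have hu : IsUnit (((algebraMap (Lr A) S).comp (im A)) f.reverse) := by
    rw [RingHom.comp_apply, im_rev, map_mul]
    exact hfu.mul ((LaurentPolynomial.isUnit_T _).map _)
  let φ2 : R2 →+* S := IsLocalization.Away.lift f.reverse hu
  have hc : (algebraMap (Lr A) S).comp (im A) = φ2.comp (algebraMap _ R2) :=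
    (IsLocalization.Away.lift_comp f.reverse hu).symm
  have hc' : ∀ x, algebraMap (Lr A) S (im A x) = φ2 (algebraMap _ R2 x) := fun x => RingHom.congr_fun hc x
  have hφ1 : Function.Injective (algebraMap (Lr A) S) := by
    apply IsLocalization.injective S (M := Submonoid.powers (ip A f))
    rw [Submonoid.powers_le]
    exact ip_nzd f hf
  have H1 : HasDen (algebraMap (Lr A) S) (Submonoid.powers (im A f.reverse)) := by
    intro c
    obtain ⟨⟨p, ⟨_, k, rfl⟩⟩, hp⟩ := IsLocalization.surj (Submonoid.powers (ip A f)) c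
    simp only at hp
    refine ⟨im A f.reverse ^ k, ⟨k, rfl⟩, p * T (-(f.natDegree : ℤ)) ^ k, ?_⟩
    rw [im_rev, mul_pow, map_mul, map_mul, ← hp]; ring
  have H2 : HasDen φ2 (Submonoid.powers (algebraMap (Polynomial A) R2 Polynomial.X)) := by
    intro c
    obtain ⟨⟨p, ⟨_, k, rfl⟩⟩, hp⟩ := IsLocalization.surj (Submonoid.powers (ip A f)) c
    simp only at hp
    obtain ⟨m, q, hq⟩ := im_exists p
    have hX : im A (Polynomial.X ^ (f.natDegree * k)) = T (-(f.natDegree : ℤ)) ^ k := by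
      rw [map_pow, im_X, pow_mul, T_pow]; simp
    have hr : im A (f.reverse ^ k) = (ip A f * T (-(f.natDegree : ℤ))) ^ k := by rw [map_pow, im_rev]
    have hspec := IsLocalization.mk'_spec R2 (q * Polynomial.X ^ (f.natDegree * k))
      (⟨f.reverse ^ k, k, rfl⟩ : Submonoid.powers f.reverse)
    refine ⟨algebraMap (Polynomial A) R2 Polynomial.X ^ m, ⟨m, rfl⟩,
      IsLocalization.mk' R2 (q * Polynomial.X ^ (f.natDegree * k)) (⟨f.reverse ^ k, k, rfl⟩ : Submonoid.powers f.reverse), ?_⟩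
    generalize IsLocalization.mk' R2 (q * Polynomial.X ^ (f.natDegree * k))
      (⟨f.reverse ^ k, k, rfl⟩ : Submonoid.powers f.reverse) = r at hspec ⊢
    have huk : IsUnit (φ2 (algebraMap _ R2 (f.reverse ^ k))) := by
      rw [← hc', map_pow, map_pow]; exact hu.pow k
    apply huk.mul_right_cancel
    have h6 := congrArg φ2 hspec
    rw [map_mul] at h6
    refine h6.trans ?_
    rw [← map_pow, ← hc', ← hc', ← hc', map_mul (im A), hq, map_mul, map_mul, ← hp, hr, hX, mul_pow, map_mul]
    ring
  obtain ⟨e1, he1, e2, he2, he⟩ := gluing hn (algebraMap (Lr A) S) φ2 (im A) (algebraMap _ R2) hc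
    Polynomial.X f.reverse (rev_cop f hf) H1 H2 hg
  obtain ⟨W, hW1, hW2⟩ := lift_GL (algebraMap (Lr A) S) φ2 (im A) (algebraMap _ R2) im_inj
    (entry _ hφ1 φ2 f.reverse (rev_cop f hf) hc) (e1⁻¹ * glMap (ip A) g) e2 (by
      rw [map_mul, he, map_inv, inv_mul_cancel_left])
  have hu0 : IsUnit (Polynomial.evalRingHom (0 : A) f.reverse) := by
    rw [Polynomial.coe_evalRingHom, ← Polynomial.coeff_zero_eq_eval_zero, Polynomial.coeff_zero_reverse,
      hf.leadingCoeff]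
    exact isUnit_one
  have hW0 : glMap (Polynomial.evalRingHom 0) W ∈ elemGL n A := by
    have h1 := glMap_mem (IsLocalization.Away.lift (S := R2) f.reverse hu0) he2
    rw [← hW2, gg (IsLocalization.Away.lift_comp f.reverse hu0)] at h1
    exact h1
  refine global_thm hn g (W⁻¹ * glMap Polynomial.C (glMap (Polynomial.evalRingHom 0) W)) ?_ ?_
  · rw [map_mul, map_inv, gg (ev_C _), glMap_id, inv_mul_cancel]
  · have h2 : glMap (ip A) g * glMap (im A) (W⁻¹ * glMap Polynomial.C (glMap (Polynomial.evalRingHom 0) W)) =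
        e1 * glMap (cL A) (glMap (Polynomial.evalRingHom 0) W) := by
      rw [map_mul, map_inv, hW1, gg im_C, _root_.mul_inv_rev, inv_inv, ← mul_assoc, mul_inv_cancel_left]
    rw [h2]
    exact mul_mem he1 (glMap_mem _ hW0)

end Final

/-- If `g ∈ GL_n(A[x])` becomes elementary over the localization `A[x]_f` at a monic
polynomial `f`, then `g` is elementary over `A[x]`; i.e. `K_1(A[x]) → K_1(A[x]_f)`
is injective. -/
theorem K1_inj_monic_localization (n : ℕ) (hn : 3 ≤ n) (A : Type*) [CommRing A]
    (f : Polynomial A) (hf : f.Monic) (g : GL (Fin n) (Polynomial A))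
    (h : glMap (algebraMap (Polynomial A) (Localization.Away f)) g ∈
      elemGL n (Localization.Away f)) :
    g ∈ elemGL n (Polynomial A) := by
  have hfu : IsUnit (((algebraMap (Lr A) (Localization.Away (ip A f))).comp (ip A)) f) :=
    IsLocalization.Away.algebraMap_isUnit (ip A f)
  have h1 := glMap_mem (IsLocalization.Away.lift (S := Localization.Away f) f hfu) h
  rw [gg (IsLocalization.Away.lift_comp f hfu), ← glMap_glMap] at h1
  exact final_aux (S := Localization.Away (ip A f)) (R2 := Localization.Away f.reverse) hn f hf g h1
end

section
/- Let A be a commutative ring and n ≥ 3. Let g(X) ∈ GL_n(A[X]) be such that g(0) ∈ E_n(A) and for every maximal ideal m of A the image of g(X) in GL_n(A_m[X]) lies in E_n(A_m[X]). Then g(X) ∈ E_n(A[X]). -/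
namespace SuslinLG
open Polynomial Matrix

section basics
variable {n : ℕ} {R S T : Type*} [CommRing R] [CommRing S] [CommRing T]

lemma glMap_coe (f : R →+* S) (g : GL (Fin n) R) :
    (glMap f g : Matrix (Fin n) (Fin n) S) = (g : Matrix (Fin n) (Fin n) R).map f := rfl

lemma glMap_glMap (f : R →+* S) (f' : S →+* T) (g : GL (Fin n) R) :
    glMap f' (glMap f g) = glMap (f'.comp f) g := by
  ext i j; rfl

lemma glMap_congr {f f' : R →+* S} (h : f = f') (g : GL (Fin n) R) :
    glMap f g = glMap f' g := by rw [h]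

/-- elementary transvection as a unit -/
def et (i j : Fin n) (h : i ≠ j) (a : R) : GL (Fin n) R :=
  ⟨transvection i j a, transvection i j (-a),
    by rw [transvection_mul_transvection_same i j h]; simp,
    by rw [transvection_mul_transvection_same i j h]; simp⟩

lemma et_coe (i j : Fin n) (h : i ≠ j) (a : R) :
    (et i j h a : Matrix (Fin n) (Fin n) R) = transvection i j a := rfl

lemma et_inv (i j : Fin n) (h : i ≠ j) (a : R) : (et i j h a)⁻¹ = et i j h (-a) := by
  apply Units.ext
  rfl

lemma et_mul (i j : Fin n) (h : i ≠ j) (a b : R) :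
    et i j h a * et i j h b = et i j h (a + b) := by
  apply Units.ext
  exact transvection_mul_transvection_same i j h a b

lemma glMap_et (f : R →+* S) (i j : Fin n) (h : i ≠ j) (a : R) :
    glMap f (et i j h a) = et i j h (f a) := by
  apply Units.ext
  rw [glMap_coe, et_coe, et_coe]
  ext k l
  simp [transvection, Matrix.single_apply, Matrix.one_apply, apply_ite f]

/-- elementary subgroup generated by transvections with entries in `J` -/
def relEl (n : ℕ) (J : Set R) : Subgroup (GL (Fin n) R) :=
  Subgroup.closure {g | ∃ (i j : Fin n) (h : i ≠ j) (a : R), a ∈ J ∧ g = et i j h a}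

lemma et_mem_relEl {J : Set R} {i j : Fin n} (h : i ≠ j) {a : R} (ha : a ∈ J) :
    et i j h a ∈ relEl n J := Subgroup.subset_closure ⟨i, j, h, a, ha, rfl⟩

lemma elemGL_eq : elemGL n R = relEl n Set.univ := by
  unfold elemGL relEl
  congr 1
  ext g
  constructor
  · rintro ⟨i, j, a, h, e⟩
    exact ⟨i, j, h, a, trivial, Units.ext e⟩
  · rintro ⟨i, j, h, a, -, e⟩
    exact ⟨i, j, a, h, by rw [e]; rfl⟩

lemma et_mem {i j : Fin n} (h : i ≠ j) (a : R) : et i j h a ∈ elemGL n R := by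
  rw [elemGL_eq]; exact et_mem_relEl h trivial

lemma relEl_le {J : Set R} {H : Subgroup (GL (Fin n) R)}
    (hH : ∀ i j (h : i ≠ j), ∀ a ∈ J, et i j h a ∈ H) : relEl n J ≤ H := by
  unfold relEl
  rw [Subgroup.closure_le]
  rintro _ ⟨i, j, h, a, ha, rfl⟩
  exact hH i j h a ha

lemma elemGL_le {H : Subgroup (GL (Fin n) R)}
    (hH : ∀ i j (h : i ≠ j) a, et i j h a ∈ H) : elemGL n R ≤ H := by
  rw [elemGL_eq]
  exact relEl_le fun i j h a _ => hH i j h a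

lemma glMap_mem (f : R →+* S) {g : GL (Fin n) R} (hg : g ∈ elemGL n R) :
    glMap f g ∈ elemGL n S := by
  have : elemGL n R ≤ (elemGL n S).comap (glMap f) := by
    apply elemGL_le
    intro i j h a
    rw [Subgroup.mem_comap, glMap_et]
    exact et_mem h _
  exact this hg

/-- commutator relations -/
lemma comm_disj (i j k l : Fin n) (h : i ≠ j) (h' : k ≠ l) (hli : l ≠ i) (hkj : k ≠ j) (a b : R) :
    et k l h' a * et i j h b * (et k l h' a)⁻¹ = et i j h b := by
  rw [mul_inv_eq_iff_eq_mul]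
  apply Units.ext
  simp only [Units.val_mul, et_coe, transvection, add_mul, mul_add, one_mul, mul_one,
    single_mul_single_of_ne _ _ _ _ hli, single_mul_single_of_ne _ _ _ _ hkj.symm]
  abel

lemma comm_left (i j k : Fin n) (h : i ≠ j) (h' : k ≠ i) (hkj : k ≠ j) (a b : R) :
    et k i h' a * et i j h b * (et k i h' a)⁻¹ = et k j hkj (a * b) * et i j h b := by
  rw [mul_inv_eq_iff_eq_mul]
  apply Units.ext
  simp only [Units.val_mul, et_coe, transvection, add_mul, mul_add, one_mul, mul_one,
    single_mul_single_same,
    single_mul_single_of_ne _ _ _ _ h.symm, single_mul_single_of_ne _ _ _ _ hkj.symm]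
  abel_nf
  simp [single_mul_single_of_ne _ _ _ _ h.symm, single_mul_single_of_ne _ _ _ _ hkj.symm]

lemma comm_right (i j l : Fin n) (h : i ≠ j) (h' : j ≠ l) (hil : i ≠ l) (a b : R) :
    et j l h' a * et i j h b * (et j l h' a)⁻¹ = et i j h b * et i l hil (-(a * b)) := by
  rw [mul_inv_eq_iff_eq_mul]
  apply Units.ext
  simp only [Units.val_mul, et_coe, transvection, add_mul, mul_add, one_mul, mul_one,
    single_mul_single_same, single_mul_single_of_ne _ _ _ _ h.symm,
    single_mul_single_of_ne _ _ _ _ hil.symm, single_mul_single_of_ne _ _ _ _ h'.symm]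
  have : single i l (-(a*b)) = - single i l (b * a) := by
    rw [mul_comm a b]; ext; simp [single_apply]; split_ifs <;> simp
  rw [this]
  simp [mul_assoc, single_mul_single_of_ne _ _ _ _ h.symm,
    single_mul_single_of_ne _ _ _ _ hil.symm, single_mul_single_of_ne _ _ _ _ h'.symm]
  abel

lemma et_comm (i m j : Fin n) (him : i ≠ m) (hmj : m ≠ j) (hij : i ≠ j) (a b : R) :
    et i j hij (a * b) = et i m him a * et m j hmj b * (et i m him a)⁻¹ * (et m j hmj b)⁻¹ := by
  rw [comm_left m j i hmj him hij, mul_assoc, mul_inv_cancel, mul_one]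

end basics

section conj
variable {n : ℕ} {R S : Type*} [CommRing R] [CommRing S] (φ : R →+* S)

/-- entries `φ (u r)` -/
def mults (u : R) : Set S := {x | ∃ r, x = φ (u * r)}

lemma conj_A (u t : R) (k l : Fin n) (h' : k ≠ l) (a : S) (p : R) (ha : φ t * a = φ p)
    (i j : Fin n) (h : i ≠ j) (hne : ¬ (k = j ∧ l = i)) (r : R) :
    et k l h' a * et i j h (φ (t * u * r)) * (et k l h' a)⁻¹ ∈ relEl n (mults φ u) := by
  have e : a * φ (t * u * r) = φ (u * (p * r)) := by
    simp only [map_mul, ← ha]; ring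
  have m1 : et i j h (φ (t * u * r)) ∈ relEl n (mults φ u) :=
    et_mem_relEl h ⟨t * r, by ring_nf⟩
  by_cases hli : l = i
  · subst hli
    have hkj : k ≠ j := fun hk => hne ⟨hk, rfl⟩
    rw [comm_left l j k h h' hkj]
    exact mul_mem (et_mem_relEl _ ⟨_, e⟩) m1
  by_cases hkj : k = j
  · subst hkj
    rw [comm_right i k l h h' (Ne.symm hli)]
    refine mul_mem m1 (et_mem_relEl _ ⟨-(p * r), ?_⟩)
    rw [e, ← map_neg]; ring_nf
  rw [comm_disj i j k l h h' hli hkj]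
  exact m1

lemma conj_B (hn : 3 ≤ n) (u t : R) (k l : Fin n) (h' : k ≠ l) (a : S) (p : R)
    (ha : φ t * a = φ p) (x : GL (Fin n) S) (hx : x ∈ relEl n (mults φ ((t * u) * (t * u)))) :
    et k l h' a * x * (et k l h' a)⁻¹ ∈ relEl n (mults φ u) := by
  have : relEl n (mults φ ((t * u) * (t * u))) ≤
      (relEl n (mults φ u)).comap (MulAut.conj (et k l h' a)).toMonoidHom := by
    apply relEl_le
    rintro i j h _ ⟨r, rfl⟩
    obtain ⟨m, hmi, hmj⟩ := Fin.exists_ne_and_ne_of_two_lt i j (by omega)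
    have e : φ (t * u * (t * u) * r) = φ (t * u * 1) * φ (t * u * r) := by
      rw [← map_mul]; ring_nf
    rw [e, et_comm i m j hmi.symm hmj h]
    by_cases hc : k = j ∧ l = i
    · have h1 : et i m hmi.symm (φ (t * u * 1)) ∈
        (relEl n (mults φ u)).comap (MulAut.conj (et k l h' a)).toMonoidHom := by
        refine conj_A φ u t k l h' a p ha _ _ _ ?_ _
        intro hh; exact hmj (hh.1.symm.trans hc.1)
      have h2 : et m j hmj (φ (t * u * r)) ∈
        (relEl n (mults φ u)).comap (MulAut.conj (et k l h' a)).toMonoidHom := by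
        refine conj_A φ u t k l h' a p ha _ _ _ ?_ _
        intro hh; exact hmi (hh.2.symm.trans hc.2)
      exact mul_mem (mul_mem (mul_mem h1 h2) (inv_mem h1)) (inv_mem h2)
    · rw [← et_comm i m j hmi.symm hmj h, ← e, mul_assoc (t * u)  (t * u) r]
      exact conj_A φ u t k l h' a p ha _ _ _ hc _
  exact this hx

lemma mults_one_le : relEl n (mults φ 1) ≤ (elemGL n R).map (glMap φ) := by
  apply relEl_le
  rintro i j h _ ⟨r, rfl⟩
  exact ⟨et i j h (1 * r), et_mem h _, glMap_et _ _ _ _ _⟩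

lemma conj_C (hn : 3 ≤ n) (M : Submonoid R) (hM : ∀ a : S, ∃ t ∈ M, ∃ p, φ t * a = φ p)
    (γ : GL (Fin n) S) (hγ : γ ∈ elemGL n S) :
    ∀ u ∈ M, ∃ v ∈ M, ∀ x ∈ relEl n (mults φ v), γ * x * γ⁻¹ ∈ relEl n (mults φ u) := by
  rw [elemGL_eq] at hγ
  unfold relEl at hγ
  have key : ∀ (k l : Fin n) (h : k ≠ l) (a : S), ∀ u ∈ M, ∃ v ∈ M, ∀ x ∈ relEl n (mults φ v),
      et k l h a * x * (et k l h a)⁻¹ ∈ relEl n (mults φ u) := by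
    intro k l h a u hu
    obtain ⟨t, ht, p, hp⟩ := hM a
    exact ⟨_, mul_mem (mul_mem ht hu) (mul_mem ht hu),
      fun x hx => conj_B φ hn u t k l h a p hp x hx⟩
  induction hγ using Subgroup.closure_induction'' with
  | mem x hx =>
    obtain ⟨k, l, h, a, -, rfl⟩ := hx
    exact key k l h a
  | inv_mem x hx =>
    obtain ⟨k, l, h, a, -, rfl⟩ := hx
    rw [et_inv]
    exact key k l h (-a)
  | one => intro u hu; exact ⟨u, hu, by simp⟩
  | mul x y _ _ hx hy =>
    intro u hu
    obtain ⟨v, hv, H⟩ := hx u hu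
    obtain ⟨w, hw, H'⟩ := hy v hv
    refine ⟨w, hw, fun z hz => ?_⟩
    have := H _ (H' z hz)
    simpa [mul_assoc] using this

end conj

section loc
variable {n : ℕ} {R S : Type*} [CommRing R] [CommRing S]

/-- elementary form of being a localization -/
structure IsLoc (M : Submonoid R) (φ : R →+* S) : Prop where
  surj : ∀ a : S, ∃ t ∈ M, ∃ p, φ t * a = φ p
  ker : ∀ r : R, φ r = 0 → ∃ t ∈ M, t * r = 0

lemma IsLoc.of_isLocalization [Algebra R S] (M : Submonoid R) [IsLocalization M S] :
    IsLoc M (algebraMap R S) where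
  surj a := by
    obtain ⟨⟨p, t⟩, h⟩ := IsLocalization.surj M a
    exact ⟨t, t.2, p, by rw [mul_comm]; exact h⟩
  ker r hr := by
    obtain ⟨t, h⟩ := (IsLocalization.map_eq_zero_iff M S r).1 hr
    exact ⟨t, t.2, h⟩

lemma IsLoc.poly {M : Submonoid R} {φ : R →+* S} (h : IsLoc M φ) :
    IsLoc (M.map (C : R →+* R[X])) (mapRingHom φ) where
  surj a := by
    induction a using Polynomial.induction_on' with
    | add p q hp hq =>
      obtain ⟨_, ⟨t, ht, rfl⟩, a, ha⟩ := hp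
      obtain ⟨_, ⟨t', ht', rfl⟩, b, hb⟩ := hq
      refine ⟨C t * C t', ⟨t * t', mul_mem ht ht', by simp⟩, C t' * a + C t * b, ?_⟩
      rw [map_add, map_mul, map_mul, map_mul, ← ha, ← hb]; ring
    | monomial k a =>
      obtain ⟨t, ht, p, hp⟩ := h.surj a
      refine ⟨C t, ⟨t, ht, rfl⟩, monomial k p, ?_⟩
      simp [C_mul_monomial, hp]
  ker r hr := by
    have h1 : ∀ i, ∃ t ∈ M, t * r.coeff i = 0 := fun i => by
      apply h.ker
      have := congrArg (fun q => q.coeff i) hr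
      simpa using this
    choose t ht hz using h1
    refine ⟨C (∏ i ∈ r.support, t i), ⟨_, prod_mem fun i _ => ht i, rfl⟩, ?_⟩
    ext i
    rw [coeff_C_mul, coeff_zero]
    by_cases hi : i ∈ r.support
    · obtain ⟨c, hc⟩ := Finset.dvd_prod_of_mem t hi
      rw [hc, mul_right_comm, hz, zero_mul]
    · rw [notMem_support_iff.1 hi, mul_zero]

/-- `p(Z) ↦ p(sZ)` -/
noncomputable def sc (s : R) : R[X] →+* R[X] := eval₂RingHom C (C s * X)

@[simp] lemma sc_C (s a : R) : sc s (C a) = C a := by simp [sc]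
@[simp] lemma sc_X (s : R) : sc s X = C s * X := by simp [sc]

lemma sc_map (φ : R →+* S) (s : R) :
    (sc (φ s)).comp (mapRingHom φ) = (mapRingHom φ).comp (sc s) := by
  ext <;> simp

lemma sc_sc (s t : R) : (sc t).comp (sc s) = sc (s * t) := by
  ext <;> simp [mul_assoc]

/-- constants of a matrix -/
noncomputable def ct (g : GL (Fin n) R[X]) : GL (Fin n) R[X] :=
  glMap (C.comp (evalRingHom 0)) g

lemma ct_mul (g h : GL (Fin n) R[X]) : ct (g * h) = ct g * ct h := map_mul _ _ _
lemma ct_inv (g : GL (Fin n) R[X]) : ct g⁻¹ = (ct g)⁻¹ := map_inv _ _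
lemma sc_ct (s : R) (g : GL (Fin n) R[X]) : glMap (sc s) (ct g) = ct g := by
  rw [ct, glMap_glMap]
  refine glMap_congr ?_ g
  ext <;> simp
lemma ct_mem {g : GL (Fin n) R[X]} (hg : g ∈ elemGL n R[X]) : ct g ∈ elemGL n R[X] :=
  glMap_mem _ hg

variable (M : Submonoid R) (φ : R →+* S)

/-- auxiliary subgroup -/
def HH (n : ℕ) : Subgroup (GL (Fin n) S[X]) where
  carrier := {x | ∀ u ∈ M, ∃ v ∈ M, ∀ w ∈ M,
    glMap (sc (φ (v * w))) x ∈ relEl n (mults (mapRingHom φ) (C u))}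
  one_mem' := fun u hu => ⟨1, one_mem _, fun w _ => by rw [map_one]; exact one_mem _⟩
  mul_mem' := by
    intro x y hx hy u hu
    obtain ⟨v, hv, H⟩ := hx u hu
    obtain ⟨v', hv', H'⟩ := hy u hu
    refine ⟨v * v', mul_mem hv hv', fun w hw => ?_⟩
    rw [map_mul]
    refine mul_mem ?_ ?_
    · rw [mul_assoc]; exact H _ (mul_mem hv' hw)
    · rw [mul_comm v, mul_assoc]; exact H' _ (mul_mem hv hw)
  inv_mem' := by
    intro x hx u hu
    obtain ⟨v, hv, H⟩ := hx u hu
    refine ⟨v, hv, fun w hw => ?_⟩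
    rw [map_inv]
    exact inv_mem (H w hw)

variable {M φ}

lemma HH_conj (hn : 3 ≤ n) (hL : IsLoc M φ) {γ x : GL (Fin n) S[X]} (hγ : γ ∈ elemGL n S[X])
    (hx : x ∈ HH M φ n) : ct γ * x * (ct γ)⁻¹ ∈ HH M φ n := by
  intro u hu
  obtain ⟨_, ⟨v, hv, rfl⟩, H⟩ := conj_C (mapRingHom φ) hn (M.map (C : R →+* R[X]))
    hL.poly.surj (ct γ) (ct_mem hγ) (C u) ⟨u, hu, rfl⟩
  obtain ⟨v', hv', H'⟩ := hx v hv
  refine ⟨v', hv', fun w hw => ?_⟩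
  rw [map_mul, map_mul, map_inv, sc_ct]
  exact H _ (H' w hw)

lemma HH_et (hL : IsLoc M φ) (i j : Fin n) (h : i ≠ j) (f : S[X]) :
    et i j h (X * f) ∈ HH M φ n := by
  intro u hu
  obtain ⟨_, ⟨t, ht, rfl⟩, p, hp⟩ := hL.poly.surj f
  refine ⟨t * u, mul_mem ht hu, fun w hw => ?_⟩
  rw [glMap_et]
  refine et_mem_relEl _ ⟨C w * X * sc (t * u * w) p, ?_⟩
  have e := congrArg (sc (φ (t * u * w))) hp
  have e2 := RingHom.congr_fun (sc_map φ (t * u * w)) p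
  simp only [RingHom.comp_apply] at e2
  rw [e2, map_mul] at e
  rw [map_mul, map_mul (mapRingHom φ), map_mul (mapRingHom φ) (C w * X), ← e]
  simp
  ring

lemma HH_main (hn : 3 ≤ n) (hL : IsLoc M φ) {w : GL (Fin n) S[X]} (hw : w ∈ elemGL n S[X]) :
    w * (ct w)⁻¹ ∈ HH M φ n := by
  have hw' := hw
  rw [elemGL_eq] at hw'
  unfold relEl at hw'
  have sub : ∀ {y}, y ∈ Subgroup.closure {g | ∃ (i j : Fin n) (h : i ≠ j) (a : S[X]),
      a ∈ Set.univ ∧ g = et i j h a} → y ∈ elemGL n S[X] := by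
    intro y hy
    rw [elemGL_eq]; exact hy
  clear hw
  induction hw' using Subgroup.closure_induction with
  | mem x hx =>
    obtain ⟨i, j, h, a, -, rfl⟩ := hx
    have : ct (et i j h a) = et i j h (C (a.coeff 0)) := by
      rw [ct, glMap_et]; simp [coeff_zero_eq_eval_zero]
    rw [this, et_inv, et_mul]
    have e : a + -C (a.coeff 0) = X * a.divX := by
      have := X_mul_divX_add a
      linear_combination -this
    rw [e]
    exact HH_et hL i j h _
  | one => simp [ct]
  | mul x y hx hy ihx ihy =>
    have := mul_mem ihx (HH_conj hn hL (sub hx) ihy)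
    rw [ct_mul]
    convert this using 1
    group
  | inv x hx ih =>
    have := HH_conj hn hL (inv_mem (sub hx)) (inv_mem ih)
    rw [ct_inv] at this ⊢
    convert this using 1
    group

/-- kernel step -/
lemma ker_step (hL : IsLoc M φ) (k : GL (Fin n) R[X]) (h0 : ct k = 1)
    (h1 : glMap (mapRingHom φ) k = 1) : ∃ t ∈ M, glMap (sc t) k = 1 := by
  have hd : ∀ i j, ∃ t ∈ M, C t * ((k : Matrix _ _ R[X]) i j - (1 : Matrix (Fin n) (Fin n) R[X]) i j) = 0 := by
    intro i j
    have e : mapRingHom φ ((k : Matrix _ _ R[X]) i j - (1 : Matrix (Fin n) (Fin n) R[X]) i j) = 0 := by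
      have := congrArg (fun g : GL (Fin n) S[X] => (g : Matrix _ _ S[X]) i j) h1
      simp only [glMap_coe, Matrix.map_apply] at this
      rw [map_sub, this]
      by_cases hij : i = j <;> simp [Matrix.one_apply, hij]
    obtain ⟨_, ⟨t, ht, rfl⟩, h⟩ := hL.poly.ker _ e
    exact ⟨t, ht, h⟩
  choose t ht hz using hd
  refine ⟨∏ i, ∏ j, t i j, prod_mem fun i _ => prod_mem fun j _ => ht i j, ?_⟩
  set T := ∏ i, ∏ j, t i j with hT
  apply Units.ext
  ext1 i j
  have hTz : C T * ((k : Matrix _ _ R[X]) i j - (1 : Matrix (Fin n) (Fin n) R[X]) i j) = 0 := by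
    have : t i j ∣ T := (Finset.dvd_prod_of_mem (t i) (Finset.mem_univ j)).trans
      (Finset.dvd_prod_of_mem (fun i => ∏ j, t i j) (Finset.mem_univ i))
    obtain ⟨c, hc⟩ := this
    rw [hc, C_mul, mul_right_comm, hz, zero_mul]
  set d := (k : Matrix _ _ R[X]) i j - (1 : Matrix (Fin n) (Fin n) R[X]) i j with hd
  have hd0 : d.coeff 0 = 0 := by
    have := congrArg (fun g : GL (Fin n) R[X] => (g : Matrix _ _ R[X]) i j) h0
    simp only [ct, glMap_coe, Matrix.map_apply] at this
    have h2 := congrArg (eval 0) this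
    simp at h2
    rw [coeff_zero_eq_eval_zero, hd, eval_sub, h2, sub_self]
  have e : d = X * d.divX := by
    conv_lhs => rw [← X_mul_divX_add d, hd0]
    simp
  have e2 : C T * d.divX = 0 := by
    rw [e] at hTz
    ext m
    have := congrArg (fun q => q.coeff (m+1)) hTz
    simp only [mul_left_comm (C T) X, coeff_X_mul] at this
    exact this
  have e3 : sc T d = 0 := by
    have := congrArg (sc T) e2
    rw [map_mul, sc_C, map_zero] at this
    rw [e, map_mul, sc_X, mul_right_comm, this, zero_mul]
  have e4 : sc T ((1 : Matrix (Fin n) (Fin n) R[X]) i j) = (1 : Matrix (Fin n) (Fin n) R[X]) i j := by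
    by_cases hij : i = j <;> simp [Matrix.one_apply, hij]
  rw [hd, map_sub, e4, sub_eq_zero] at e3
  exact e3

lemma dilation (hn : 3 ≤ n) (hL : IsLoc M φ) (h : GL (Fin n) R[X]) (h0 : ct h = 1)
    (h1 : glMap (mapRingHom φ) h ∈ elemGL n S[X]) :
    ∃ s ∈ M, glMap (sc s) h ∈ elemGL n R[X] := by
  have ctφ : ∀ g : GL (Fin n) R[X], ct (glMap (mapRingHom φ) g) = glMap (mapRingHom φ) (ct g) := by
    intro g
    rw [ct, ct, glMap_glMap, glMap_glMap]
    refine glMap_congr ?_ g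
    ext <;> simp
  have ctsc : ∀ s, ∀ g : GL (Fin n) R[X], ct (glMap (sc s) g) = ct g := by
    intro s g
    rw [ct, ct, glMap_glMap]
    refine glMap_congr ?_ g
    ext <;> simp
  have hH := HH_main hn hL h1
  rw [ctφ, h0, map_one, inv_one, mul_one] at hH
  obtain ⟨v, hv, H⟩ := hH 1 (one_mem _)
  have H := H 1 (one_mem _)
  rw [mul_one, map_one, glMap_glMap, sc_map, ← glMap_glMap] at H
  obtain ⟨ε, hε, he⟩ := mults_one_le _ H
  set k := glMap (sc v) h * (ε * (ct ε)⁻¹)⁻¹ with hk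
  have hcct : ∀ g : GL (Fin n) R[X], ct (ct g) = ct g := by
    intro g
    rw [ct, ct, glMap_glMap]
    refine glMap_congr ?_ g
    ext <;> simp
  obtain ⟨t, ht, hkt⟩ := ker_step hL k
    (by rw [hk, ct_mul, ctsc, h0, ct_inv, ct_mul, ct_inv, hcct]; simp)
    (by
      rw [hk, map_mul, map_inv, map_mul, map_inv, ← ctφ, he, ctφ, ctsc, h0]; simp)
  refine ⟨v * t, mul_mem hv ht, ?_⟩
  rw [hk, map_mul, map_inv, mul_inv_eq_one, glMap_glMap, sc_sc] at hkt
  rw [hkt]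
  exact glMap_mem _ (mul_mem hε (inv_mem (ct_mem hε)))

end loc

section main
variable {n : ℕ} {A : Type*} [CommRing A]

/-- substitution `X ↦ a` -/
noncomputable def sb (a : A[X]) : A[X] →+* A[X] := eval₂RingHom C a

/-- Quillen ideal -/
def QI (g : GL (Fin n) A[X]) : Ideal A where
  carrier := {s | ∀ a c : A[X], glMap (sb (a + C s * c)) g * (glMap (sb a) g)⁻¹ ∈ elemGL n A[X]}
  zero_mem' := by
    intro a c
    simp
  add_mem' := by
    intro s t hs ht a c
    have := mul_mem (hs (a + C t * c) c) (ht a c)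
    convert this using 1
    rw [show a + C (s + t) * c = a + C t * c + C s * c by rw [C_add]; ring]
    group
  smul_mem' := by
    intro r s hs a c
    have := hs a (C r * c)
    rwa [show a + C s * (C r * c) = a + C (r • s) * c by rw [smul_eq_mul, C_mul]; ring] at this

lemma QI_local (hn : 3 ≤ n) {B : Type*} [CommRing B] (M : Submonoid A) (φ : A →+* B)
    (hL : IsLoc M φ) (g : GL (Fin n) A[X]) (hg : glMap (mapRingHom φ) g ∈ elemGL n B[X]) :
    ∃ s ∈ M, s ∈ QI g := by
  let α : A[X] →+* A[X][X] := eval₂RingHom (C.comp C) (C X + X)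
  let α' : B[X] →+* B[X][X] := eval₂RingHom (C.comp C) (C X + X)
  let h : GL (Fin n) A[X][X] := glMap α g * (glMap C g)⁻¹
  obtain ⟨_, ⟨s, hs, rfl⟩, H⟩ := dilation hn hL.poly h (by
      have : (((C : A[X] →+* A[X][X]).comp (evalRingHom 0)).comp α) =
          ((C : A[X] →+* A[X][X]).comp (evalRingHom 0)).comp C := by
        ext <;> simp [α]
      simp only [h]
      rw [ct_mul, ct_inv, ct, ct, glMap_glMap, glMap_glMap, this, mul_inv_cancel]) (by
      have e1 : (mapRingHom (mapRingHom φ)).comp α = α'.comp (mapRingHom φ) := by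
        ext <;> simp [α, α']
      have e2 : (mapRingHom (mapRingHom φ)).comp C = C.comp (mapRingHom φ) := by
        ext <;> simp
      simp only [h]
      rw [map_mul, map_inv, glMap_glMap, glMap_glMap, e1, e2, ← glMap_glMap, ← glMap_glMap]
      exact mul_mem (glMap_mem _ hg) (inv_mem (glMap_mem _ hg)))
  refine ⟨s, hs, fun a c => ?_⟩
  let β : A[X][X] →+* A[X] := eval₂RingHom (sb a) c
  have := glMap_mem β H
  simp only [h] at this
  rw [map_mul, map_inv, map_mul, map_inv, glMap_glMap, glMap_glMap, glMap_glMap,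
    glMap_glMap] at this
  have f1 : sb (a + C s * c) = (β.comp (sc (C s))).comp α := by
    ext <;> simp [α, β, sb]
  have f2 : sb a = (β.comp (sc (C s))).comp C := by
    ext <;> simp [β, sb]
  rw [f1, f2]
  exact this

end main

end SuslinLG

/-- Suslin's local-global principle: if `g(X) ∈ GL_n(A[X])` has `g(0) ∈ E_n(A)` and becomes
elementary over `A_m[X]` for every maximal ideal `m` of `A`, then `g(X) ∈ E_n(A[X])`. -/
theorem suslin_local_global (n : ℕ) (hn : 3 ≤ n) (A : Type*) [CommRing A]
    (g : GL (Fin n) (Polynomial A))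
    (h0 : glMap (Polynomial.evalRingHom (0 : A)) g ∈ elemGL n A)
    (hloc : ∀ (m : Ideal A) (hm : m.IsMaximal),
      haveI : m.IsPrime := hm.isPrime
      glMap (Polynomial.mapRingHom (algebraMap A (Localization.AtPrime m))) g ∈
        elemGL n (Polynomial (Localization.AtPrime m))) :
    g ∈ elemGL n (Polynomial A) := by
  have htop : SuslinLG.QI g = ⊤ := by
    by_contra hne
    obtain ⟨m, hm, hle⟩ := Ideal.exists_le_maximal _ hne
    haveI : m.IsPrime := hm.isPrime
    obtain ⟨s, hs, hs'⟩ := SuslinLG.QI_local hn m.primeCompl _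
      (SuslinLG.IsLoc.of_isLocalization (S := Localization.AtPrime m) m.primeCompl) g (hloc m hm)
    exact hs (hle hs')
  have h1 : (1 : A) ∈ SuslinLG.QI g := by rw [htop]; trivial
  have h2 := h1 0 Polynomial.X
  have e1 : SuslinLG.sb (0 + Polynomial.C (1 : A) * Polynomial.X) = RingHom.id _ := by
    ext <;> simp [SuslinLG.sb]
  have e2 : SuslinLG.sb (0 : Polynomial A) =
      Polynomial.C.comp (Polynomial.evalRingHom (0 : A)) := by
    ext <;> simp [SuslinLG.sb]
  have e3 : glMap (RingHom.id (Polynomial A)) g = g := by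
    ext i j; rfl
  rw [e1, e2, e3, ← SuslinLG.glMap_glMap] at h2
  have h3 := mul_mem h2 (SuslinLG.glMap_mem Polynomial.C h0)
  rwa [inv_mul_cancel_right] at h3
end
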